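/- arXiv:2106.09615 — 3 statements merged into one kernel-verified Lean document; each statement's English description precedes it below -/
import Mathlib

section
/- There exist absolute constants C1, C2, C3 > 0 with the following property. Let p ≥ 16 be a prime and let γ ∈ F_p^* have multiplicative order at least exp(C1·log p / log log p). Consider the Markov chain (X_n) on F_p^* started from an arbitrary fixed X_0 ∈ F_p^*, whose one-step transition from a state x moves to f_*(x)·ε, where ε is drawn uniformly from {1, γ^{-1}, γ}. Then for every c > 0 and every integer n ≥ c·exp(log p / log log p), one has (1/2)·max_{A ⊆ F_p^*} |P(X_n ∈ A) − |A|/(p−1)| ≤ C2·e^{−C3·c}. -/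
open scoped BigOperators

/-- The distribution of the Markov chain after `n` steps: the `n`-fold bind of
`step` applied to the point mass at `x0`. -/
noncomputable def walkDist {S : Type*} (step : S → PMF S) (x0 : S) : ℕ → PMF S :=
  fun n => (fun μ : PMF S => μ.bind step)^[n] (PMF.pure x0)


namespace CDG
open Polynomial

/-- The linear functional on integer polynomials sending `X^i` to `r i`. -/
noncomputable def Lf (r : ℕ → ℤ) : ℤ[X] →ₗ[ℤ] ℤ :=
  Polynomial.lsum (fun i => LinearMap.mulRight ℤ (r i))

lemma Lf_monomial (r : ℕ → ℤ) (i : ℕ) (a : ℤ) : Lf r (monomial i a) = a * r i := by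
  simp [Lf, Polynomial.lsum_apply, Polynomial.sum_monomial_index]

lemma Lf_eq_sum (r : ℕ → ℤ) (G : ℤ[X]) (n : ℕ) (h : G.natDegree < n) :
    Lf r G = ∑ i ∈ Finset.range n, G.coeff i * r i := by
  conv_lhs => rw [G.as_sum_range' n h]
  rw [map_sum]
  exact Finset.sum_congr rfl fun i _ => Lf_monomial r i _

lemma Lf_monomial_mul (r : ℕ → ℤ) (j : ℕ) (a : ℤ) (P : ℤ[X]) :
    Lf r (monomial j a * P) = a * Lf (fun i => r (j + i)) P := by
  induction P using Polynomial.induction_on' with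
  | add p q hp hq => rw [mul_add, map_add, map_add, hp, hq, mul_add]
  | monomial n c => rw [monomial_mul_monomial, Lf_monomial, Lf_monomial]; ring

lemma Lf_expand (r : ℕ → ℤ) (q : ℕ) (P : ℤ[X]) :
    Lf r (expand ℤ q P) = Lf (fun i => r (q * i)) P := by
  induction P using Polynomial.induction_on' with
  | add p q hp hq => rw [map_add, map_add, map_add, hp, hq]
  | monomial n c => rw [expand_monomial, Lf_monomial, Lf_monomial, mul_comm n q]

lemma Lf_mul_eq_zero (r : ℕ → ℤ) (P G : ℤ[X]) (N : ℕ)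
    (h : ∀ j ≤ N, Lf (fun i => r (j + i)) P = 0) (hG : G.natDegree ≤ N) :
    Lf r (G * P) = 0 := by
  rw [G.as_sum_range' (N + 1) (by omega), Finset.sum_mul, map_sum]
  refine Finset.sum_eq_zero fun j hj => ?_
  rw [Lf_monomial_mul, h j (by simpa [Nat.lt_succ_iff] using hj), mul_zero]

lemma Lf_cast (p : ℕ) (r : ℕ → ℤ) (ξ g : ZMod p) (h : ∀ i, (r i : ZMod p) = ξ * g ^ i)
    (G : ℤ[X]) : ((Lf r G : ℤ) : ZMod p) = ξ * aeval g G := by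
  induction G using Polynomial.induction_on' with
  | add p q hp hq => rw [map_add, map_add, Int.cast_add, hp, hq, mul_add]
  | monomial n c => rw [Lf_monomial, Int.cast_mul, h, aeval_monomial]; simp; ring

lemma Lf_abs_le (r : ℕ → ℤ) (P : ℤ[X]) (d : ℕ) (hd : P.natDegree < d)
    (hc : ∀ i, |P.coeff i| ≤ 1) (b : ℝ) (hr : ∀ i < d, |(r i : ℝ)| ≤ b) :
    |((Lf r P : ℤ) : ℝ)| ≤ d * b := by
  rw [Lf_eq_sum r P d hd]
  push_cast
  refine (Finset.abs_sum_le_sum_abs _ _).trans ?_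
  refine (Finset.sum_le_sum (g := fun _ => b) fun i hi => ?_).trans (by simp)
  rw [abs_mul]
  have h1 : |((P.coeff i : ℤ) : ℝ)| ≤ 1 := by exact_mod_cast hc i
  have := hr i (by simpa using hi)
  nlinarith [abs_nonneg ((P.coeff i : ℤ) : ℝ), abs_nonneg (r i : ℝ)]

lemma expand_sub_pow (q : ℕ) (hq : q.Prime) (P : ℤ[X]) :
    ∃ G : ℤ[X], expand ℤ q P = P ^ q + (q : ℤ) • G := by
  have := Fact.mk hq
  have h : (expand ℤ q P - P ^ q).map (Int.castRingHom (ZMod q)) = 0 := by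
    rw [Polynomial.map_sub, Polynomial.map_expand, Polynomial.map_pow, ZMod.expand_card, sub_self]
  have h2 : C (q : ℤ) ∣ expand ℤ q P - P ^ q := by
    rw [C_dvd_iff_dvd_coeff]
    intro i
    have := congrArg (fun f => f.coeff i) h
    simp only [coeff_map, coeff_zero] at this
    exact (ZMod.intCast_zmod_eq_zero_iff_dvd _ _).1 (by simpa using this)
  obtain ⟨G, hG⟩ := h2
  refine ⟨G, ?_⟩
  rw [smul_eq_C_mul, ← hG]; ring

lemma int_zero_of_small (p : ℕ) (z : ℤ) (h0 : (z : ZMod p) = 0) (h : |(z : ℝ)| < p) : z = 0 := by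
  have h1 := (ZMod.intCast_zmod_eq_zero_iff_dvd _ _).1 h0
  refine Int.eq_zero_of_abs_lt_dvd h1 ?_
  exact_mod_cast h

lemma valMinAbs_le (p : ℕ) [NeZero p] (x : ZMod p) (z : ℤ) (h : (z : ZMod p) = x) :
    |(x.valMinAbs : ℝ)| ≤ |(z : ℝ)| := by
  have := ZMod.natAbs_min_of_le_div_two p x.valMinAbs z (by simp [h]) (ZMod.natAbs_valMinAbs_le x)
  have h2 : |x.valMinAbs| ≤ |z| := by
    rw [Int.abs_eq_natAbs, Int.abs_eq_natAbs]; exact_mod_cast this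
  exact_mod_cast h2

lemma descent_step (p : ℕ) [Fact p.Prime] (γ ξ : ZMod p) (d N q : ℕ) (P : ℤ[X])
    (hd : P.natDegree < d) (hc : ∀ i, |P.coeff i| ≤ 1) (hP : aeval γ P = 0) (b : ℝ)
    (hb : d * b < p) (hq : q.Prime) (hqd : 2 * d ≤ q) (hqp : q < p)
    (hbad : ∀ j ≤ N + q * d, |(((ξ * γ ^ j).valMinAbs : ℤ) : ℝ)| ≤ b) :
    ∀ k ≤ N, |(((ξ * aeval (γ ^ q) P / q * γ ^ k).valMinAbs : ℤ) : ℝ)| ≤ b / 2 := by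
  intro k hk
  have hd1 : 1 ≤ d := by omega
  have hb0 : 0 ≤ b := (abs_nonneg _).trans (hbad 0 (by omega))
  set r : ℕ → ℤ := fun i => (ξ * γ ^ (k + i)).valMinAbs with hr
  have hrc : ∀ i, (r i : ZMod p) = (ξ * γ ^ k) * γ ^ i := by
    intro i; simp [hr, pow_add]; ring
  have hrec : ∀ j ≤ (q - 1) * d, Lf (fun i => r (j + i)) P = 0 := by
    intro j hj
    apply int_zero_of_small p
    · rw [Lf_cast p _ (ξ * γ ^ (k + j)) γ, hP, mul_zero]
      intro i; rw [hrc]; ring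
    · refine lt_of_le_of_lt (Lf_abs_le _ P d hd hc b ?_) hb
      intro i hi
      apply hbad
      have : (q - 1) * d + d = q * d := by
        have := hq.one_le
        rw [← Nat.succ_mul]; congr 1; omega
      omega
  obtain ⟨G, hG⟩ := expand_sub_pow q hq P
  have h1 : Lf r (expand ℤ q P) = q * Lf r G := by
    rw [hG, map_add, map_smul, smul_eq_mul]
    have : P ^ q = P ^ (q - 1) * P := by
      rw [← pow_succ]; congr 1; have := hq.one_le; omega
    rw [this, Lf_mul_eq_zero r P _ _ hrec, zero_add]
    exact natDegree_pow_le.trans (Nat.mul_le_mul_left _ hd.le)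
  have hq0 : (q : ZMod p) ≠ 0 := by
    intro h
    rw [ZMod.natCast_eq_zero_iff] at h
    exact absurd (Nat.le_of_dvd hq.pos h) (by omega)
  have h2 : ((Lf r G : ℤ) : ZMod p) = ξ * aeval (γ ^ q) P / q * γ ^ k := by
    have h3 := Lf_cast p r _ γ hrc (expand ℤ q P)
    rw [h1, expand_aeval] at h3
    push_cast at h3
    field_simp
    rw [mul_comm, h3]; ring
  refine (valMinAbs_le p _ _ h2).trans ?_
  have h4 : |((Lf r (expand ℤ q P) : ℤ) : ℝ)| ≤ d * b := by
    rw [Lf_expand]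
    refine Lf_abs_le _ P d hd hc b ?_
    intro i hi
    apply hbad
    have := Nat.mul_le_mul_left q hi.le
    omega
  rw [h1] at h4
  push_cast at h4
  rw [abs_mul, Nat.abs_cast] at h4
  have hqr : (2 * d : ℝ) ≤ q := by exact_mod_cast hqd
  have hdr : (1 : ℝ) ≤ d := by exact_mod_cast hd1
  have h5 : 2 * d * |((Lf r G : ℤ) : ℝ)| ≤ d * b :=
    (mul_le_mul_of_nonneg_right hqr (abs_nonneg _)).trans h4
  nlinarith

lemma descent (p : ℕ) [Fact p.Prime] (γ : ZMod p) (d q : ℕ) (P : ℤ[X])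
    (hd : P.natDegree < d) (hc : ∀ i, |P.coeff i| ≤ 1) (hP : aeval γ P = 0)
    (hq : q.Prime) (hqd : 2 * d ≤ q) (hqp : q < p) (hne : aeval (γ ^ q) P ≠ 0) (t : ℕ) :
    ∀ (ξ : ZMod p) (b : ℝ), ξ ≠ 0 → d * b < p → b < 2 ^ t →
    ¬ (∀ j ≤ t * (q * d), |(((ξ * γ ^ j).valMinAbs : ℤ) : ℝ)| ≤ b) := by
  have hq0 : (q : ZMod p) ≠ 0 := by
    intro h
    rw [ZMod.natCast_eq_zero_iff] at h
    exact absurd (Nat.le_of_dvd hq.pos h) (by omega)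
  induction t with
  | zero =>
    intro ξ b hξ hb hb1 hbad
    have := (hbad 0 (by omega)).trans_lt hb1
    rw [pow_zero, pow_zero, mul_one] at this
    have h2 : |ξ.valMinAbs| < 1 := by exact_mod_cast this
    rw [Int.abs_lt_one_iff, ZMod.valMinAbs_eq_zero] at h2
    exact hξ h2
  | succ t ih =>
    intro ξ b hξ hb hb1 hbad
    have hb0 : 0 ≤ b := (abs_nonneg _).trans (hbad 0 (by omega))
    refine ih (ξ * aeval (γ ^ q) P / q) (b / 2) ?_ ?_ ?_ ?_
    · exact div_ne_zero (mul_ne_zero hξ hne) hq0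
    · have : (0:ℝ) ≤ d * b := by positivity
      linarith
    · rw [pow_succ] at hb1; linarith
    · refine descent_step p γ ξ d _ q P hd hc hP b hb hq hqd hqp ?_
      intro j hj
      apply hbad
      rw [Nat.succ_mul]; exact hj

lemma exists_poly (p : ℕ) [Fact p.Prime] (γ : ZMod p) (d : ℕ) (hd : p < 2 ^ d) :
    ∃ P : ℤ[X], P.natDegree < d ∧ (∀ i, |P.coeff i| ≤ 1) ∧ aeval γ P = 0 ∧
      P.map (Int.castRingHom (ZMod p)) ≠ 0 := by
  have hp2 : 2 ≤ p := (Fact.out : p.Prime).two_le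
  have hd0 : 0 < d := by
    rcases Nat.eq_zero_or_pos d with h | h
    · subst h; simp at hd; omega
    · exact h
  obtain ⟨S, hS, T, hT, hne, heq⟩ := Finset.exists_ne_map_eq_of_card_lt_of_maps_to
    (s := (Finset.range d).powerset) (t := (Finset.univ : Finset (ZMod p)))
    (f := fun S => ∑ i ∈ S, γ ^ i) (by simpa [ZMod.card] using hd) (fun _ _ => by simp)
  set f : Finset ℕ → ℤ[X] := fun S => ∑ i ∈ S, X ^ i with hf
  have hcoef : ∀ S i, (f S).coeff i = if i ∈ S then 1 else 0 := by
    intro S i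
    simp [hf, coeff_X_pow]
  refine ⟨f S - f T, ?_, ?_, ?_, ?_⟩
  · refine lt_of_le_of_lt (natDegree_le_iff_coeff_eq_zero (n := d - 1).2 ?_) (by omega)
    intro m hm
    rw [coeff_sub, hcoef, hcoef]
    have h1 : m ∉ S := fun h => by
      have := Finset.mem_powerset.1 hS h; simp at this; omega
    have h2 : m ∉ T := fun h => by
      have := Finset.mem_powerset.1 hT h; simp at this; omega
    simp [h1, h2]
  · intro i
    rw [coeff_sub, hcoef, hcoef]
    split_ifs <;> simp
  · simp [hf, sub_eq_zero]; exact heq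
  · intro h
    apply hne
    ext i
    have := congrArg (fun f => f.coeff i) h
    simp only [coeff_map, coeff_sub, hcoef, coeff_zero] at this
    by_cases h1 : i ∈ S <;> by_cases h2 : i ∈ T <;> simp [h1, h2] at this ⊢

/-- Key arithmetic lemma. -/
lemma exists_large (p : ℕ) [Fact p.Prime] (γ : ZMod p) (d Q : ℕ) (hd : p < 2 ^ d)
    (hQp : Q < p) (hQ : Q < orderOf γ)
    (hpr : d ≤ ((Finset.Icc (2 * d) Q).filter Nat.Prime).card) (ξ : ZMod p) (hξ : ξ ≠ 0) :
    ∃ j ≤ d * (Q * d), (p : ℝ) / (2 * d) < |(((ξ * γ ^ j).valMinAbs : ℤ) : ℝ)| := by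
  obtain ⟨P, hPd, hPc, hP0, hPm⟩ := exists_poly p γ d hd
  have hd0 : 0 < d := by omega
  have hp0 : (0:ℝ) < p := by exact_mod_cast (Fact.out : p.Prime).pos
  by_contra! hcon
  have hall : ∀ q ∈ (Finset.Icc (2 * d) Q).filter Nat.Prime, aeval (γ ^ q) P = 0 := by
    intro q hq
    simp only [Finset.mem_filter, Finset.mem_Icc] at hq
    by_contra hne
    have hdr : (1:ℝ) ≤ d := by exact_mod_cast hd0
    refine descent p γ d q P hPd hPc hP0 hq.2 hq.1.1 (by omega) hne d ξ (p / (2 * d)) hξ ?_ ?_ ?_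
    · field_simp; linarith
    · have : (p:ℝ) < 2 ^ d := by exact_mod_cast hd
      refine lt_of_le_of_lt ?_ this
      apply div_le_self hp0.le; linarith
    · intro j hj
      apply hcon
      refine hj.trans ?_
      gcongr
      exact hq.1.2
  have hinj : Set.InjOn (fun q : ℕ => γ ^ q) ((Finset.Icc (2 * d) Q).filter Nat.Prime) := by
    intro a ha b hb hab
    simp only [Finset.coe_filter, Finset.mem_Icc, Set.mem_ofPred_eq] at ha hb
    exact pow_injOn_Iio_orderOf (by simp; omega) (by simp; omega) hab
  have hsub : ((Finset.Icc (2 * d) Q).filter Nat.Prime).image (fun q : ℕ => γ ^ q) ⊆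
      (P.map (Int.castRingHom (ZMod p))).roots.toFinset := by
    intro x hx
    obtain ⟨q, hq, rfl⟩ := Finset.mem_image.1 hx
    rw [Multiset.mem_toFinset, mem_roots hPm, IsRoot.def, eval_map]
    exact hall q hq
  have h1 := Finset.card_le_card hsub
  rw [Finset.card_image_of_injOn hinj] at h1
  have h2 := (Multiset.toFinset_card_le _).trans (card_roots' (P.map (Int.castRingHom (ZMod p))))
  have h3 := natDegree_map_le (f := Int.castRingHom (ZMod p)) (p := P)
  omega

end CDG

namespace CDG

lemma norm_stdAddChar_sub_one (p : ℕ) [NeZero p] (z : ZMod p) :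
    4 * |((z.valMinAbs : ℤ) : ℝ)| / p ≤ ‖ZMod.stdAddChar z - 1‖ := by
  have hp : (0:ℝ) < p := by exact_mod_cast Nat.pos_of_ne_zero (NeZero.ne p)
  conv_rhs => rw [← ZMod.coe_valMinAbs z]
  rw [ZMod.stdAddChar_coe]
  set r := z.valMinAbs
  have h1 : (2 * (Real.pi : ℂ) * Complex.I * r / p) =
      Complex.I * ((2 * Real.pi * r / p : ℝ) : ℂ) := by push_cast; ring
  rw [h1, Complex.norm_exp_I_mul_ofReal_sub_one, Real.norm_eq_abs, abs_mul]
  have hr : |(r : ℝ)| ≤ p / 2 := by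
    have := ZMod.natAbs_valMinAbs_le z
    have h3 : ((r.natAbs : ℕ) : ℝ) ≤ p / 2 :=
      le_trans (by exact_mod_cast this) (Nat.cast_div_le (α := ℝ) (m := p) (n := 2))
    rwa [Nat.cast_natAbs, Int.cast_abs] at h3
  have h2 := Real.mul_abs_le_abs_sin (x := 2 * Real.pi * r / p / 2) (by
    rw [abs_div, abs_div, abs_mul, abs_of_pos hp, abs_of_pos (by positivity : 0 < 2 * Real.pi),
      abs_two]
    rw [div_div, div_le_div_iff₀ (by positivity) (by positivity)]
    nlinarith [Real.pi_pos])
  have h4 : 2 / Real.pi * |2 * Real.pi * r / p / 2| = 2 * |(r:ℝ)| / p := by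
    rw [abs_div, abs_div, abs_mul, abs_of_pos hp, abs_of_pos (by positivity : 0 < 2 * Real.pi),
      abs_two]
    field_simp
  rw [h4] at h2
  rw [abs_two]
  calc 4 * |(r:ℝ)| / p = 2 * (2 * |(r:ℝ)| / p) := by ring
    _ ≤ _ := by gcongr

/-- Fourier transform on `ZMod p`. -/
noncomputable def ft (p : ℕ) [NeZero p] (h : ZMod p → ℝ) (ξ : ZMod p) : ℂ :=
  ∑ y, (h y : ℂ) * ZMod.stdAddChar (-(ξ * y))

lemma parseval (p : ℕ) [NeZero p] (h : ZMod p → ℝ) :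
    ∑ ξ, ‖ft p h ξ‖ ^ 2 = p * ∑ y, h y ^ 2 := by
  have key : ((∑ ξ, ‖ft p h ξ‖ ^ 2 : ℝ) : ℂ) = ((p * ∑ y, h y ^ 2 : ℝ) : ℂ) := by
    push_cast
    have h1 : ∀ ξ, ((‖ft p h ξ‖ : ℂ)) ^ 2 =
        ∑ y, ∑ z, (h y : ℂ) * h z * ZMod.stdAddChar (ξ * (z - y)) := by
      intro ξ
      rw [← Complex.mul_conj', ft, map_sum, Finset.sum_mul_sum]
      refine Finset.sum_congr rfl fun y _ => Finset.sum_congr rfl fun z _ => ?_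
      rw [map_mul, Complex.conj_ofReal, ← AddChar.map_neg_eq_conj, neg_neg,
        show ξ * (z - y) = -(ξ * y) + ξ * z by ring, AddChar.map_add_eq_mul]
      ring
    simp_rw [h1]
    rw [Finset.sum_comm, Finset.mul_sum]
    refine Finset.sum_congr rfl fun y _ => ?_
    rw [Finset.sum_comm]
    simp_rw [← Finset.mul_sum, AddChar.sum_mulShift _ (ZMod.isPrimitive_stdAddChar p), sub_eq_zero]
    rw [Finset.sum_eq_single y (by intro z _ hz; simp [hz]) (by simp)]
    simp [ZMod.card]; ring
  exact_mod_cast key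

lemma ft_shift (p : ℕ) [NeZero p] (h : ZMod p → ℝ) (t ξ : ZMod p) :
    ft p (fun y => h (y + t) - h y) ξ = (ZMod.stdAddChar (ξ * t) - 1) * ft p h ξ := by
  unfold ft
  have h1 : ∑ y, (h (y + t) : ℂ) * ZMod.stdAddChar (-(ξ * y)) =
      ZMod.stdAddChar (ξ * t) * ∑ y, (h y : ℂ) * ZMod.stdAddChar (-(ξ * y)) := by
    rw [Finset.mul_sum]
    refine Fintype.sum_equiv (Equiv.addRight t) _ _ fun y => ?_
    simp only [Equiv.coe_addRight]
    rw [show -(ξ * y) = ξ * t + -(ξ * (y + t)) by ring, AddChar.map_add_eq_mul]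
    ring
  rw [sub_mul, one_mul, ← h1, ← Finset.sum_sub_distrib]
  refine Finset.sum_congr rfl fun y _ => ?_
  push_cast; ring

lemma fourier_gap (p : ℕ) [NeZero p] (d N : ℕ) (hd : 0 < d) (t : ℕ → ZMod p)
    (ht : ∀ ξ : ZMod p, ξ ≠ 0 → ∃ j ≤ N,
      (p : ℝ) / (2 * d) < |(((ξ * t j).valMinAbs : ℤ) : ℝ)|)
    (h : ZMod p → ℝ) (h0 : ∑ y, h y = 0) :
    4 / (d:ℝ) ^ 2 * ∑ y, h y ^ 2 ≤
      ∑ j ∈ Finset.range (N + 1), ∑ y, (h (y + t j) - h y) ^ 2 := by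
  have hp : (0:ℝ) < p := by exact_mod_cast Nat.pos_of_ne_zero (NeZero.ne p)
  have hdr : (0:ℝ) < d := by exact_mod_cast hd
  refine le_of_mul_le_mul_left ?_ hp
  calc (p:ℝ) * (4 / (d:ℝ) ^ 2 * ∑ y, h y ^ 2) = ∑ ξ, 4 / (d:ℝ) ^ 2 * ‖ft p h ξ‖ ^ 2 := by
        rw [← Finset.mul_sum, parseval]; ring
    _ ≤ ∑ ξ, ∑ j ∈ Finset.range (N + 1),
          ‖ZMod.stdAddChar (ξ * t j) - 1‖ ^ 2 * ‖ft p h ξ‖ ^ 2 := by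
        refine Finset.sum_le_sum fun ξ _ => ?_
        by_cases hξ : ξ = 0
        · subst hξ
          have : ft p h 0 = 0 := by
            unfold ft; simp; exact_mod_cast h0
          simp [this]
        · obtain ⟨j, hj, hjl⟩ := ht ξ hξ
          refine le_trans ?_ (Finset.single_le_sum (f := fun j =>
            ‖ZMod.stdAddChar (ξ * t j) - 1‖ ^ 2 * ‖ft p h ξ‖ ^ 2) (fun _ _ => by positivity)
            (Finset.mem_range.2 (Nat.lt_succ_of_le hj)))
          refine mul_le_mul_of_nonneg_right ?_ (by positivity)
          have h1 := norm_stdAddChar_sub_one p (ξ * t j)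
          have h2 : 2 / (d:ℝ) ≤ ‖ZMod.stdAddChar (ξ * t j) - 1‖ := by
            refine le_trans ?_ h1
            rw [le_div_iff₀ hp]
            calc 2 / (d:ℝ) * p = 4 * (p / (2 * d)) := by field_simp; ring
              _ ≤ _ := by gcongr
          calc 4 / (d:ℝ) ^ 2 = (2 / d) ^ 2 := by ring
            _ ≤ _ := by gcongr
    _ = ∑ j ∈ Finset.range (N + 1), ∑ ξ, ‖ft p (fun y => h (y + t j) - h y) ξ‖ ^ 2 := by
        rw [Finset.sum_comm]
        simp_rw [ft_shift, norm_mul, mul_pow]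
    _ = _ := by
        simp_rw [parseval, Finset.mul_sum]

end CDG
namespace CDG

/-- The map `f_*`. -/
noncomputable def fs {p : ℕ} [Fact p.Prime] (x : ZMod p) : ZMod p := if x = 1 then 1 else x / (x - 1)

/-- Averaging operator. -/
noncomputable def Mop {p : ℕ} [Fact p.Prime] (γ : ZMod p) (g : ZMod p → ℝ) (x : ZMod p) : ℝ :=
  (g x + g (γ * x) + g (γ⁻¹ * x)) / 3

/-- Dirichlet energy along multiplication by `γ`. -/
noncomputable def En {p : ℕ} [Fact p.Prime] (γ : ZMod p) (g : ZMod p → ℝ) : ℝ :=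
  ∑ x, (g (γ * x) - g x) ^ 2

section
variable {p : ℕ} [Fact p.Prime]

lemma fs_invol : Function.Involutive (fs : ZMod p → ZMod p) := by
  intro x
  by_cases h1 : x = 1
  · simp [fs, h1]
  · have h2 : x - 1 ≠ 0 := sub_ne_zero.2 h1
    have h3 : x / (x - 1) ≠ 1 := by
      intro h
      rw [div_eq_one_iff_eq h2] at h
      have : (1 : ZMod p) = 0 := by linear_combination h
      exact one_ne_zero this
    have h4 : x / (x - 1) - 1 = 1 / (x - 1) := by field_simp; ring
    simp only [fs, h1, if_false, h3]
    rw [h4]; field_simp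

lemma fs_zero : fs (0 : ZMod p) = 0 := by simp [fs]

lemma fs_ne_zero {x : ZMod p} (hx : x ≠ 0) : fs x ≠ 0 := fun h => by
  have := fs_invol x
  rw [h, fs_zero] at this
  exact hx this.symm

lemma sum_fs (g : ZMod p → ℝ) : ∑ x, g (fs x) = ∑ x, g x :=
  Equiv.sum_comp fs_invol.toPerm g

lemma sum_mul_left {c : ZMod p} (hc : c ≠ 0) (g : ZMod p → ℝ) : ∑ x, g (c * x) = ∑ x, g x :=
  Equiv.sum_comp (Equiv.mulLeft₀ c hc) g

lemma inv_energy {γ : ZMod p} (hγ : γ ≠ 0) (k g : ZMod p → ℝ) (hk : ∀ y, y ≠ 0 → k y = g y⁻¹) :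
    En γ k = En γ g := by
  unfold En
  refine Fintype.sum_equiv ((Equiv.mulLeft₀ γ hγ).trans (Equiv.inv _)) _ _ fun y => ?_
  simp only [Equiv.trans_apply, Equiv.mulLeft₀_apply, Equiv.inv_apply]
  by_cases hy : y = 0
  · simp [hy]
  · rw [hk y hy, hk (γ * y) (mul_ne_zero hγ hy)]
    have : γ * (γ * y)⁻¹ = y⁻¹ := by field_simp
    rw [this]; ring

lemma iter_energy {γ : ZMod p} (hγ : γ ≠ 0) (h : ZMod p → ℝ) (j : ℕ) :
    ∑ y, (h (γ ^ j * y) - h y) ^ 2 ≤ j ^ 2 * En γ h := by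
  have h1 : ∀ y, (h (γ ^ j * y) - h y) ^ 2 ≤
      j * ∑ i ∈ Finset.range j, (h (γ ^ (i + 1) * y) - h (γ ^ i * y)) ^ 2 := by
    intro y
    have h2 : h (γ ^ j * y) - h y =
        ∑ i ∈ Finset.range j, (h (γ ^ (i + 1) * y) - h (γ ^ i * y)) := by
      rw [Finset.sum_range_sub (fun i => h (γ ^ i * y))]; simp
    rw [h2]
    have := sq_sum_le_card_mul_sum_sq (s := Finset.range j)
      (f := fun i => h (γ ^ (i + 1) * y) - h (γ ^ i * y))
    simpa using this
  refine (Finset.sum_le_sum fun y _ => h1 y).trans ?_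
  rw [← Finset.mul_sum, Finset.sum_comm]
  have h3 : ∀ i ∈ Finset.range j, ∑ y, (h (γ ^ (i + 1) * y) - h (γ ^ i * y)) ^ 2 = En γ h := by
    intro i _
    unfold En
    rw [← sum_mul_left (pow_ne_zero i hγ) (fun y => (h (γ * y) - h y) ^ 2)]
    refine Finset.sum_congr rfl fun y _ => ?_
    rw [pow_succ' γ, mul_assoc]
  rw [Finset.sum_congr rfl h3]
  simp only [Finset.sum_const, Finset.card_range, nsmul_eq_mul]
  exact le_of_eq (by ring)

lemma En_nonneg (γ : ZMod p) (g : ZMod p → ℝ) : 0 ≤ En γ g :=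
  Finset.sum_nonneg fun _ _ => sq_nonneg _

lemma shift_energy {γ : ZMod p} (hγ : γ ≠ 0) (h : ZMod p → ℝ) (j : ℕ) :
    ∑ y, (h (y + γ ^ j * (1 - γ)) - h y) ^ 2 ≤
      6 * ((j:ℝ) ^ 2 + 1) * (En γ h + En γ (fun z => h (1 - z))) := by
  have hA : ∑ w, (h (w + (1 - γ)) - h w) ^ 2 ≤ 2 * (En γ h + En γ (fun z => h (1 - z))) := by
    rw [← sum_mul_left hγ]
    have h1 : En γ (fun z => h (1 - z)) = ∑ z, (h (1 - γ * (1 - z)) - h z) ^ 2 := by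
      unfold En
      refine Fintype.sum_equiv (Equiv.subLeft 1) _ _ fun z => ?_
      simp
    rw [h1, En, ← Finset.sum_add_distrib, Finset.mul_sum]
    refine Finset.sum_le_sum fun z _ => ?_
    rw [show γ * z + (1 - γ) = 1 - γ * (1 - z) by ring]
    nlinarith [sq_nonneg ((h (1 - γ * (1 - z)) - h z) + (h (γ * z) - h z))]
  have hI := iter_energy hγ h j
  have hI2 : ∑ w, (h (γ ^ j * (w + (1 - γ))) - h (w + (1 - γ))) ^ 2 ≤ j ^ 2 * En γ h := by
    refine le_trans (le_of_eq ?_) hI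
    exact Equiv.sum_comp (Equiv.addRight (1 - γ)) (fun y => (h (γ ^ j * y) - h y) ^ 2)
  rw [← sum_mul_left (pow_ne_zero j hγ)]
  have h2 : ∑ w, (h (γ ^ j * w + γ ^ j * (1 - γ)) - h (γ ^ j * w)) ^ 2 ≤
      3 * (∑ w, (h (γ ^ j * (w + (1 - γ))) - h (w + (1 - γ))) ^ 2 +
        ∑ w, (h (w + (1 - γ)) - h w) ^ 2 + ∑ w, (h (γ ^ j * w) - h w) ^ 2) := by
    rw [← Finset.sum_add_distrib, ← Finset.sum_add_distrib, Finset.mul_sum]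
    refine Finset.sum_le_sum fun w _ => ?_
    rw [← mul_add]
    set a := h (γ ^ j * (w + (1 - γ)))
    set b := h (w + (1 - γ))
    set c := h w
    set e := h (γ ^ j * w)
    nlinarith [sq_nonneg ((a - b) - (b - c)), sq_nonneg ((a - b) + (e - c)),
      sq_nonneg ((b - c) + (e - c))]
  refine h2.trans ?_
  have := mul_nonneg (sq_nonneg (j:ℝ)) (En_nonneg γ (fun z => h (1 - z)))
  nlinarith

lemma gap {γ : ZMod p} (hγ : γ ≠ 0) (hγ1 : γ ≠ 1) (d N : ℕ) (hd : 0 < d)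
    (ht : ∀ ξ : ZMod p, ξ ≠ 0 → ∃ j ≤ N,
      (p : ℝ) / (2 * d) < |(((ξ * γ ^ j).valMinAbs : ℤ) : ℝ)|)
    (g : ZMod p → ℝ) (g0 : g 0 = 0) (gs : ∑ x, g x = 0) :
    4 / (d:ℝ) ^ 2 * ∑ x, g x ^ 2 ≤
      (N + 1) * (6 * ((N:ℝ) ^ 2 + 1) * (En γ g + En γ (fun x => g (fs x)))) := by
  set h : ZMod p → ℝ := fun y => if y = 0 then g 1 else g y⁻¹ with hh
  set m : ℝ := (∑ y, h y) / p with hm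
  have hp : (0:ℝ) < p := by exact_mod_cast (Fact.out : p.Prime).pos
  have hsum : ∑ y, (h y - m) = 0 := by
    rw [Finset.sum_sub_distrib]; simp [ZMod.card, hm]; field_simp; simp
  have e0 : En γ h = En γ g := inv_energy hγ h g fun y hy => by simp [hh, hy]
  have e1 : En γ (fun z => h (1 - z)) = En γ (fun x => g (fs x)) := by
    refine inv_energy hγ _ _ fun z hz => ?_
    by_cases hz1 : z = 1
    · simp [hh, hz1, fs]
    · have h1 : 1 - z ≠ 0 := sub_ne_zero.2 (Ne.symm hz1)
      have h2 : z⁻¹ ≠ 1 := by simpa using hz1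
      simp only [hh, h1, if_false, fs, h2]
      congr 1
      have h3 : z⁻¹ - 1 = (1 - z) / z := by field_simp
      rw [h3]; field_simp
  have hF := fourier_gap p d N hd (fun j => γ ^ j * (1 - γ)) (by
    intro ξ hξ
    obtain ⟨j, hj, hl⟩ := ht (ξ * (1 - γ)) (mul_ne_zero hξ (sub_ne_zero.2 (Ne.symm hγ1)))
    refine ⟨j, hj, ?_⟩
    rwa [show ξ * (γ ^ j * (1 - γ)) = ξ * (1 - γ) * γ ^ j by ring]) (fun y => h y - m) hsum
  have hlow : ∑ x, g x ^ 2 ≤ ∑ y, (h y - m) ^ 2 := by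
    have h1 : ∑ x, g x ^ 2 = ∑ y, (g y⁻¹ ^ 2 - 2 * m * g y⁻¹) := by
      have hi := Equiv.sum_comp (Equiv.inv (ZMod p)) (fun y => g y ^ 2 - 2 * m * g y)
      simp only [Equiv.inv_apply] at hi
      rw [hi, Finset.sum_sub_distrib, ← Finset.mul_sum, gs]; ring
    rw [h1]
    refine Finset.sum_le_sum fun y _ => ?_
    by_cases hy : y = 0
    · simp [hy, g0]; positivity
    · simp only [hh, hy, if_false]; nlinarith [sq_nonneg m]
  refine (mul_le_mul_of_nonneg_left hlow (by positivity)).trans (hF.trans ?_)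
  have hE : 0 ≤ En γ g + En γ (fun x => g (fs x)) := add_nonneg (En_nonneg _ _) (En_nonneg _ _)
  refine (Finset.sum_le_card_nsmul _ _
    (6 * ((N:ℝ) ^ 2 + 1) * (En γ g + En γ (fun x => g (fs x)))) ?_).trans (by simp)
  intro j hj
  have hjN : (j:ℝ) ≤ N := by
    have := Finset.mem_range.1 hj; exact_mod_cast Nat.lt_succ_iff.1 this
  have := shift_energy hγ h j
  rw [e0, e1] at this
  simp only [sub_sub_sub_cancel_right]
  refine this.trans ?_
  gcongr

lemma Mop_sq {γ : ZMod p} (hγ : γ ≠ 0) (g : ZMod p → ℝ) :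
    ∑ x, Mop γ g x ^ 2 ≤ ∑ x, g x ^ 2 - 2 / 9 * En γ g := by
  have h1 : ∑ x, g (γ * x) ^ 2 = ∑ x, g x ^ 2 := sum_mul_left hγ (fun x => g x ^ 2)
  have h2 : ∑ x, g (γ⁻¹ * x) ^ 2 = ∑ x, g x ^ 2 :=
    sum_mul_left (inv_ne_zero hγ) (fun x => g x ^ 2)
  have h3 : ∑ x, (g (γ⁻¹ * x) - g x) ^ 2 = En γ g := by
    rw [← sum_mul_left hγ]
    unfold En
    refine Finset.sum_congr rfl fun x _ => ?_
    rw [inv_mul_cancel_left₀ hγ]; ring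
  have h4 : ∑ x, Mop γ g x ^ 2 ≤ ∑ x, (1 / 3 * (g x ^ 2 + g (γ * x) ^ 2 + g (γ⁻¹ * x) ^ 2) -
      1 / 9 * ((g (γ * x) - g x) ^ 2 + (g (γ⁻¹ * x) - g x) ^ 2)) := by
    refine Finset.sum_le_sum fun x _ => ?_
    unfold Mop
    nlinarith [sq_nonneg (g (γ * x) - g (γ⁻¹ * x))]
  refine h4.trans (le_of_eq ?_)
  rw [Finset.sum_sub_distrib, ← Finset.mul_sum, ← Finset.mul_sum, Finset.sum_add_distrib,
    Finset.sum_add_distrib, Finset.sum_add_distrib, h1, h2, h3, ← En]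
  ring

lemma Mop_sub_sq {γ : ZMod p} (hγ : γ ≠ 0) (g : ZMod p → ℝ) :
    ∑ x, (Mop γ g x - g x) ^ 2 ≤ 4 / 9 * En γ g := by
  have h3 : ∑ x, (g (γ⁻¹ * x) - g x) ^ 2 = En γ g := by
    rw [← sum_mul_left hγ]
    unfold En
    refine Finset.sum_congr rfl fun x _ => ?_
    rw [inv_mul_cancel_left₀ hγ]; ring
  have h4 : ∑ x, (Mop γ g x - g x) ^ 2 ≤
      ∑ x, 2 / 9 * ((g (γ * x) - g x) ^ 2 + (g (γ⁻¹ * x) - g x) ^ 2) := by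
    refine Finset.sum_le_sum fun x _ => ?_
    unfold Mop
    nlinarith [sq_nonneg (g (γ * x) - g (γ⁻¹ * x))]
  refine h4.trans (le_of_eq ?_)
  rw [← Finset.mul_sum, Finset.sum_add_distrib, h3, ← En]
  ring

lemma contraction {γ : ZMod p} (hγ : γ ≠ 0) (κ : ℝ) (g : ZMod p → ℝ)
    (hgap : κ * ∑ x, g x ^ 2 ≤ En γ g + En γ (fun x => g (fs x))) :
    ∑ x, Mop γ (fun x => Mop γ g (fs x)) x ^ 2 ≤ (1 - κ / 18) * ∑ x, g x ^ 2 := by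
  have h1 := Mop_sq hγ g
  have h2 := Mop_sq hγ (fun x => Mop γ g (fs x))
  rw [sum_fs (fun x => Mop γ g x ^ 2)] at h2
  have h3 := Mop_sub_sq hγ g
  have h4 : En γ (fun x => g (fs x)) ≤
      3 * En γ (fun x => Mop γ g (fs x)) + 6 * ∑ x, (Mop γ g x - g x) ^ 2 := by
    have h5 : ∑ x, (Mop γ g (fs x) - g (fs x)) ^ 2 = ∑ x, (Mop γ g x - g x) ^ 2 :=
      sum_fs (fun x => (Mop γ g x - g x) ^ 2)
    have h6 : ∑ x, (Mop γ g (fs (γ * x)) - g (fs (γ * x))) ^ 2 =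
        ∑ x, (Mop γ g x - g x) ^ 2 := by
      rw [← h5]
      exact sum_mul_left hγ (fun x => (Mop γ g (fs x) - g (fs x)) ^ 2)
    have h7 : En γ (fun x => g (fs x)) ≤ ∑ x, (3 * (Mop γ g (fs (γ * x)) - Mop γ g (fs x)) ^ 2 +
        3 * ((Mop γ g (fs (γ * x)) - g (fs (γ * x))) ^ 2 +
          (Mop γ g (fs x) - g (fs x)) ^ 2)) := by
      refine Finset.sum_le_sum fun x _ => ?_
      set a := Mop γ g (fs (γ * x))
      set b := Mop γ g (fs x)
      set c := g (fs (γ * x))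
      set e := g (fs x)
      nlinarith [sq_nonneg ((a - b) + (a - c)), sq_nonneg ((a - b) - (b - e)),
        sq_nonneg ((a - c) + (b - e))]
    refine h7.trans (le_of_eq ?_)
    rw [Finset.sum_add_distrib, ← Finset.mul_sum, ← Finset.mul_sum, Finset.sum_add_distrib, h5, h6,
      En]
    ring
  have := En_nonneg γ g
  have := En_nonneg γ (fun x => Mop γ g (fs x))
  nlinarith

end

end CDG
namespace CDG

section
variable {p : ℕ} [Fact p.Prime]

lemma sum_ind {e : ZMod p} (he : e ≠ 0) (m : ZMod p → ℝ) (x : ZMod p) :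
    ∑ a, m a * (if x = fs a * e then (1:ℝ) else 0) = m (fs (e⁻¹ * x)) := by
  rw [Finset.sum_eq_single (fs (e⁻¹ * x))]
  · rw [fs_invol, if_pos (by field_simp), mul_one]
  · intro a _ ha
    rw [if_neg, mul_zero]
    rintro rfl
    apply ha
    rw [mul_comm (fs a), inv_mul_cancel_left₀ he, fs_invol]
  · simp

lemma mu_succ {γ : ZMod p} (hγ : γ ≠ 0) (X0 : ZMod p) (step : ZMod p → PMF (ZMod p))
    (hstep : step = (fun x => PMF.map
                (fun i : Fin 3 =>
                  if i = 0 then (if x = 1 then 1 else x / (x - 1)) * 1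
                  else if i = 1 then (if x = 1 then 1 else x / (x - 1)) * γ⁻¹
                  else (if x = 1 then 1 else x / (x - 1)) * γ)
                (PMF.uniformOfFintype (Fin 3)))) (n : ℕ) (x : ZMod p) :
    (walkDist step X0 (n + 1) x).toReal =
      Mop γ (fun y => (walkDist step X0 n (fs y)).toReal) x := by
  have h1 : walkDist step X0 (n + 1) = (walkDist step X0 n).bind step := by
    unfold walkDist
    rw [Function.iterate_succ_apply']
  have h2 : ∀ a, (step a x).toReal = ((if x = fs a * 1 then (1:ℝ) else 0) +
      (if x = fs a * γ⁻¹ then (1:ℝ) else 0) + (if x = fs a * γ then (1:ℝ) else 0)) / 3 := by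
    intro a
    rw [hstep]
    change (PMF.map (fun i : Fin 3 => if i = 0 then fs a * 1 else if i = 1 then fs a * γ⁻¹
      else fs a * γ) (PMF.uniformOfFintype (Fin 3)) x).toReal = _
    rw [PMF.map_apply, tsum_fintype, ENNReal.toReal_sum (by
      intro i _; split_ifs <;> simp), Fin.sum_univ_three]
    simp only [PMF.uniformOfFintype_apply, Fintype.card_fin]
    have e1 : (1 : Fin 3) ≠ 0 := by decide
    have e2 : (2 : Fin 3) ≠ 0 := by decide
    have e3 : (2 : Fin 3) ≠ 1 := by decide
    simp only [e1, e2, e3, if_true, if_false, apply_ite ENNReal.toReal, ENNReal.toReal_zero,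
      ENNReal.toReal_inv, ENNReal.toReal_natCast]
    split_ifs <;> norm_num
  rw [h1, PMF.bind_apply, tsum_fintype, ENNReal.toReal_sum (by
    intro a _; exact ENNReal.mul_ne_top (PMF.apply_ne_top _ _) (PMF.apply_ne_top _ _))]
  simp_rw [ENNReal.toReal_mul, h2]
  have h3 := sum_ind one_ne_zero (fun a => (walkDist step X0 n a).toReal) x
  have h4 := sum_ind (inv_ne_zero hγ) (fun a => (walkDist step X0 n a).toReal) x
  have h5 := sum_ind hγ (fun a => (walkDist step X0 n a).toReal) x
  simp only [inv_one, one_mul, inv_inv] at h3 h4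
  simp only [Mop]
  rw [← h3, ← h4, ← h5, ← Finset.sum_add_distrib, ← Finset.sum_add_distrib, Finset.sum_div]
  refine Finset.sum_congr rfl fun a _ => ?_
  ring

lemma pmf_sum (μ : PMF (ZMod p)) : ∑ x, (μ x).toReal = 1 := by
  have h := PMF.tsum_coe μ
  rw [tsum_fintype] at h
  rw [← ENNReal.toReal_sum (fun a _ => PMF.apply_ne_top _ _), h]
  simp

lemma decay {γ : ZMod p} (hγ : γ ≠ 0) (X0 : ZMod p) (hX : X0 ≠ 0) (m : ℕ → ZMod p → ℝ)
    (hm0 : ∀ x, m 0 x = if x = X0 then 1 else 0)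
    (hms : ∀ n, ∑ x, m n x = 1)
    (hm : ∀ n x, m (n + 1) x = Mop γ (fun y => m n (fs y)) x)
    (κ : ℝ) (hκ : 0 ≤ κ) (hκ1 : κ ≤ 18)
    (hgap : ∀ g : ZMod p → ℝ, g 0 = 0 → ∑ x, g x = 0 →
      κ * ∑ x, g x ^ 2 ≤ En γ g + En γ (fun x => g (fs x)))
    (n : ℕ) (A : Finset (ZMod p)) (hA : ∀ x ∈ A, x ≠ 0) :
    (∑ x ∈ A, m n x - (A.card : ℝ) / ((p:ℝ) - 1)) ^ 2 ≤ 2 * p * (1 - κ / 18) ^ (n / 2) := by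
  have hp2 : (2:ℝ) ≤ p := by exact_mod_cast (Fact.out : p.Prime).two_le
  have hp1 : (0:ℝ) < (p:ℝ) - 1 := by linarith
  have hz : ∀ n, m n 0 = 0 := by
    intro n
    induction n with
    | zero => rw [hm0, if_neg (Ne.symm hX)]
    | succ n ih => rw [hm]; simp [Mop, fs_zero, ih]
  set u : ℕ → ZMod p → ℝ := fun n x => if x = 0 then 0 else m n x - 1 / ((p:ℝ) - 1) with hu
  have hu0 : ∀ n, u n 0 = 0 := fun n => by simp [hu]
  have hus : ∀ n, ∑ x, u n x = 0 := by
    intro n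
    have h1 : ∀ x, u n x = m n x - (1 / ((p:ℝ) - 1) - if x = 0 then 1 / ((p:ℝ) - 1) else 0) := by
      intro x
      by_cases hx : x = 0
      · simp [hu, hx, hz]
      · simp [hu, hx]
    simp_rw [h1]
    rw [Finset.sum_sub_distrib, Finset.sum_sub_distrib, hms]
    simp [ZMod.card]
    field_simp
    ring
  have hur : ∀ n x, u (n + 1) x = Mop γ (fun y => u n (fs y)) x := by
    intro n x
    by_cases hx : x = 0
    · simp [hx, hu0, Mop, fs_zero]
    · have h1 := fs_ne_zero hx
      have h2 := fs_ne_zero (mul_ne_zero hγ hx)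
      have h3 := fs_ne_zero (mul_ne_zero (inv_ne_zero hγ) hx)
      simp only [hu, hx, if_false, Mop, h1, h2, h3, hm]
      ring
  have hmono : ∀ n, ∑ x, u (n + 1) x ^ 2 ≤ ∑ x, u n x ^ 2 := by
    intro n
    simp_rw [hur]
    have h1 := Mop_sq hγ (fun y => u n (fs y))
    rw [sum_fs (fun y => u n y ^ 2)] at h1
    have := En_nonneg γ (fun y => u n (fs y))
    linarith
  have h2step : ∀ n, ∑ x, u (n + 2) x ^ 2 ≤ (1 - κ / 18) * ∑ x, u n x ^ 2 := by
    intro n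
    have h1 : ∀ x, u (n + 2) x = Mop γ (fun x => Mop γ (fun y => u n (fs y)) (fs x)) x := by
      intro x
      rw [hur]
      simp_rw [hur]
    simp_rw [h1]
    rw [← sum_fs (fun x => u n x ^ 2)]
    refine contraction hγ κ (fun y => u n (fs y)) ?_
    refine hgap _ ?_ ?_
    · simp [fs_zero, hu0]
    · rw [sum_fs (fun y => u n y), hus]
  have hinit : ∑ x, u 0 x ^ 2 ≤ 2 := by
    have h1 : ∀ x, u 0 x ^ 2 ≤ (if x = X0 then (1:ℝ) else 0) +
        ((1 / ((p:ℝ) - 1)) ^ 2 - if x = 0 then (1 / ((p:ℝ) - 1)) ^ 2 else 0) := by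
      intro x
      have hpos : 0 < 1 / ((p:ℝ) - 1) := by positivity
      by_cases hx : x = 0
      · simp [hu, hx, Ne.symm hX]
      · simp only [hu, hx, if_false, hm0]
        split_ifs <;> nlinarith
    refine (Finset.sum_le_sum fun x _ => h1 x).trans ?_
    rw [Finset.sum_add_distrib, Finset.sum_sub_distrib]
    simp [ZMod.card]
    have : (p:ℝ) * (((p:ℝ) - 1) ^ 2)⁻¹ - (((p:ℝ) - 1) ^ 2)⁻¹ = 1 / ((p:ℝ) - 1) := by
      field_simp
    rw [this]
    have : 1 / ((p:ℝ) - 1) ≤ 1 := by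
      rw [div_le_one hp1]; linarith
    linarith
  have hk : 0 ≤ 1 - κ / 18 := by linarith
  have hall : ∀ k, ∑ x, u (2 * k) x ^ 2 ≤ 2 * (1 - κ / 18) ^ k := by
    intro k
    induction k with
    | zero => simpa using hinit
    | succ k ih =>
      refine (h2step (2 * k)).trans ?_
      rw [pow_succ]
      nlinarith
  have hn : ∑ x, u n x ^ 2 ≤ 2 * (1 - κ / 18) ^ (n / 2) := by
    rcases Nat.even_or_odd' n with ⟨k, rfl | rfl⟩
    · rw [Nat.mul_div_cancel_left k (by norm_num)]; exact hall k
    · rw [show (2 * k + 1) / 2 = k by omega]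
      exact (hmono _).trans (hall k)
  have hS : ∑ x ∈ A, m n x - (A.card : ℝ) / ((p:ℝ) - 1) = ∑ x ∈ A, u n x := by
    have h1 : ∑ x ∈ A, u n x = ∑ x ∈ A, (m n x - 1 / ((p:ℝ) - 1)) :=
      Finset.sum_congr rfl (fun x hx => by simp [hu, hA x hx])
    rw [h1, Finset.sum_sub_distrib]
    simp [div_eq_mul_inv]
  rw [hS]
  have hc : (A.card : ℝ) ≤ p := by
    have := Finset.card_le_univ A
    rw [ZMod.card] at this
    exact_mod_cast this
  have hle : ∑ x ∈ A, u n x ^ 2 ≤ ∑ x, u n x ^ 2 :=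
    Finset.sum_le_sum_of_subset_of_nonneg (Finset.subset_univ _) fun _ _ _ => sq_nonneg _
  calc (∑ x ∈ A, u n x) ^ 2 ≤ A.card * ∑ x ∈ A, u n x ^ 2 := sq_sum_le_card_mul_sum_sq
    _ ≤ p * ∑ x, u n x ^ 2 := by
        apply mul_le_mul hc hle (Finset.sum_nonneg fun _ _ => sq_nonneg _) (by positivity)
    _ ≤ p * (2 * (1 - κ / 18) ^ (n / 2)) := by gcongr
    _ = _ := by ring

end

lemma primes_count (d : ℕ) (hd : 20 ≤ d) :
    d ≤ ((Finset.Icc (2 * d) (d ^ 3)).filter Nat.Prime).card := by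
  have hdr : (20:ℝ) ≤ d := by exact_mod_cast hd
  have h1 := Chebyshev.pi_ge (d ^ 3)
  have hlog : Real.log d ≤ d - 1 := Real.log_le_sub_one_of_pos (by linarith)
  have hlogpos : 0 < Real.log d := Real.log_pos (by linarith)
  have hlog3 : Real.log ((d:ℝ) ^ 3 + 1) ≤ 3 * d := by
    have h2 : Real.log ((d:ℝ) ^ 3 + 1) ≤ Real.log (((d:ℝ) + 1) ^ 3) :=
      Real.log_le_log (by positivity) (by nlinarith)
    rw [Real.log_pow] at h2
    have := Real.log_le_sub_one_of_pos (by linarith : (0:ℝ) < d + 1)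
    push_cast at h2
    linarith
  have h3 : (3 * d : ℝ) ≤ (Nat.primeCounting (d ^ 3) : ℝ) := by
    refine le_trans ?_ h1
    push_cast
    rw [Real.log_pow]
    push_cast
    rw [le_div_iff₀ (by positivity)]
    have := Real.log_two_gt_d9
    nlinarith [mul_nonneg (by linarith : (0:ℝ) ≤ d - 20) (sq_nonneg (d:ℝ)),
      mul_le_mul_of_nonneg_left hlog (by linarith : (0:ℝ) ≤ 9 * d),
      mul_le_mul_of_nonneg_left this.le (by positivity : (0:ℝ) ≤ (d:ℝ) ^ 3)]
  have h4 : 3 * d ≤ Nat.primeCounting (d ^ 3) := by exact_mod_cast h3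
  have h5 : Nat.primeCounting (d ^ 3) ≤
      ((Finset.Icc (2 * d) (d ^ 3)).filter Nat.Prime).card + 2 * d := by
    rw [Nat.primeCounting, Nat.primeCounting', Nat.count_eq_card_filter_range]
    calc ((Finset.range (d ^ 3 + 1)).filter Nat.Prime).card
        ≤ (((Finset.Icc (2 * d) (d ^ 3)).filter Nat.Prime) ∪ Finset.range (2 * d)).card := by
          apply Finset.card_le_card
          intro x hx
          simp only [Finset.mem_filter, Finset.mem_range, Finset.mem_union, Finset.mem_Icc] at hx ⊢
          by_cases h : x < 2 * d
          · exact Or.inr h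
          · exact Or.inl ⟨⟨by omega, by omega⟩, hx.2⟩
      _ ≤ _ := by
          refine (Finset.card_union_le _ _).trans ?_
          simp
  omega

lemma exists_threshold : ∃ l1 : ℝ, 864 * 2 ^ 17 ≤ l1 ∧ ∀ l : ℝ, l1 ≤ l →
    l ^ 19 ≤ Real.exp (l / Real.log l) := by
  have h := (Real.isLittleO_pow_log_id_atTop (n := 2)).def (c := 1 / 19) (by norm_num)
  obtain ⟨a, ha⟩ := Filter.eventually_atTop.1 h
  refine ⟨max a (864 * 2 ^ 17), le_max_right _ _, fun l hl => ?_⟩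
  have h1 := ha l ((le_max_left _ _).trans hl)
  have h2 : (864 * 2 ^ 17 : ℝ) ≤ l := (le_max_right _ _).trans hl
  have hl0 : (1:ℝ) < l := by linarith
  have hlog : 0 < Real.log l := Real.log_pos hl0
  simp only [id, Real.norm_eq_abs] at h1
  rw [abs_of_nonneg (sq_nonneg _), abs_of_pos (by linarith)] at h1
  rw [← Real.log_le_iff_le_exp (by positivity), Real.log_pow, le_div_iff₀ hlog]
  push_cast
  nlinarith

end CDG

set_option maxHeartbeats 1000000

theorem stmt1 :
    ∃ C1 C2 C3 : ℝ, 0 < C1 ∧ 0 < C2 ∧ 0 < C3 ∧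
      ∀ (p : ℕ) [Fact p.Prime], 16 ≤ p →
        ∀ γ : ZMod p, γ ≠ 0 →
          Real.exp (C1 * Real.log p / Real.log (Real.log p)) ≤ orderOf γ →
          ∀ X0 : ZMod p, X0 ≠ 0 →
            ∀ step : ZMod p → PMF (ZMod p),
              step = (fun x => PMF.map
                (fun i : Fin 3 =>
                  if i = 0 then (if x = 1 then 1 else x / (x - 1)) * 1
                  else if i = 1 then (if x = 1 then 1 else x / (x - 1)) * γ⁻¹
                  else (if x = 1 then 1 else x / (x - 1)) * γ)
                (PMF.uniformOfFintype (Fin 3))) →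
              ∀ c : ℝ, 0 < c →
                ∀ n : ℕ, c * Real.exp (Real.log p / Real.log (Real.log p)) ≤ n →
                  ∀ A : Finset (ZMod p), (∀ x ∈ A, x ≠ 0) →
                    (1/2) * |(∑ x ∈ A, (walkDist step X0 n x).toReal)
                        - (A.card : ℝ) / ((p : ℝ) - 1)| ≤ C2 * Real.exp (-C3 * c) := by
  obtain ⟨l1, hl1, hthr⟩ := CDG.exists_threshold
  refine ⟨max 1 (Real.log l1), 1, 1 / 2, by positivity, by norm_num, by norm_num, ?_⟩
  intro p hpf hp16 γ hγ hord X0 hX0 step hstep c hc n hn A hA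
  have hpr : p.Prime := Fact.out
  have hp16r : (16:ℝ) ≤ p := by exact_mod_cast hp16
  have hp0 : (0:ℝ) < p := by linarith
  have hp1 : (0:ℝ) < (p:ℝ) - 1 := by linarith
  set l := Real.log p with hl
  have hl2 : 1 < l := by
    rw [hl, Real.lt_log_iff_exp_lt hp0]
    have := Real.exp_one_lt_d9
    linarith
  have hll : 0 < Real.log l := Real.log_pos hl2
  -- order bounds
  have hordlt : orderOf γ < p := by
    have h1 : γ ^ (p - 1) = 1 := ZMod.pow_card_sub_one_eq_one hγ
    have := orderOf_le_of_pow_eq_one (by omega) h1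
    omega
  have hC : max 1 (Real.log l1) < Real.log l := by
    have h1 : Real.exp (max 1 (Real.log l1) * l / Real.log l) < p :=
      lt_of_le_of_lt hord (by exact_mod_cast hordlt)
    rw [← Real.lt_log_iff_exp_lt hp0, ← hl, div_lt_iff₀ hll] at h1
    nlinarith
  have hl1pos : 0 < l1 := lt_of_lt_of_le (by norm_num) hl1
  have hll1 : l1 < l := by
    rw [← Real.log_lt_log_iff hl1pos (by linarith)]
    exact (le_max_right _ _).trans_lt hC
  set X := Real.exp (l / Real.log l) with hX
  have hX19 : l ^ 19 ≤ X := hthr l hll1.le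
  have hXord : X ≤ orderOf γ := by
    refine le_trans ?_ hord
    rw [hX]
    apply Real.exp_le_exp.2
    rw [mul_div_assoc]
    exact le_mul_of_one_le_left (by positivity) (le_max_left _ _)
  have hlbig : (864 * 2 ^ 17 : ℝ) ≤ l := hl1.trans hll1.le
  -- the parameters
  set d := Nat.log 2 p + 1 with hd
  have hpd : p < 2 ^ d := Nat.lt_pow_succ_log_self (by norm_num) p
  have hdl : (d:ℝ) ≤ 2 * l := by
    have h1 : 2 ^ Nat.log 2 p ≤ p := Nat.pow_log_le_self 2 (by omega)
    have h2 : (2:ℝ) ^ Nat.log 2 p ≤ p := by exact_mod_cast h1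
    have h3 := Real.log_le_log (by positivity) h2
    rw [Real.log_pow, ← hl] at h3
    have := Real.log_two_gt_d9
    have h5 : (0:ℝ) ≤ (Nat.log 2 p : ℝ) := by positivity
    rw [hd]; push_cast
    nlinarith
  have hld : l < d := by
    have h2 : (p:ℝ) < 2 ^ d := by exact_mod_cast hpd
    have h3 := Real.log_lt_log hp0 h2
    rw [Real.log_pow, ← hl] at h3
    have := Real.log_two_lt_d9
    have h5 : (0:ℝ) ≤ (d : ℝ) := by positivity
    nlinarith
  have hd20 : 20 ≤ d := by
    have : (20:ℝ) ≤ d := by linarith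
    exact_mod_cast this
  have hd0 : (0:ℝ) < d := by linarith
  have hQord : d ^ 3 < orderOf γ := by
    have h1 : (d:ℝ) ^ 3 < l ^ 19 := by
      calc (d:ℝ) ^ 3 ≤ (2 * l) ^ 3 := by gcongr
        _ = 8 * l ^ 3 := by ring
        _ < l * l ^ 3 := by gcongr; linarith
        _ = l ^ 4 := by ring
        _ ≤ l ^ 19 := pow_le_pow_right₀ hl2.le (by norm_num)
    have h2 : ((d ^ 3 : ℕ) : ℝ) < orderOf γ := by
      push_cast; linarith
    exact_mod_cast h2
  have hγ1 : γ ≠ 1 := by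
    rintro rfl
    rw [orderOf_one] at hQord
    have : 0 < d ^ 3 := by positivity
    omega
  set N := d * (d ^ 3 * d) with hN
  have hlarge := CDG.exists_large p γ d (d ^ 3) hpd (by omega) hQord (CDG.primes_count d hd20)
  have hgap0 := CDG.gap hγ hγ1 d N (by omega) hlarge
  set κ : ℝ := 4 / (d:ℝ) ^ 2 / ((N + 1) * (6 * ((N:ℝ) ^ 2 + 1))) with hκ
  have hκ0 : 0 ≤ κ := by positivity
  have hgap : ∀ g : ZMod p → ℝ, g 0 = 0 → ∑ x, g x = 0 →
      κ * ∑ x, g x ^ 2 ≤ CDG.En γ g + CDG.En γ (fun x => g (CDG.fs x)) := by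
    intro g g0 gs
    have := hgap0 g g0 gs
    rw [hκ, div_mul_eq_mul_div, div_le_iff₀ (by positivity)]
    refine this.trans (le_of_eq (by ring))
  have hNr : (N:ℝ) = d ^ 5 := by rw [hN]; push_cast; ring
  have hN1 : (1:ℝ) ≤ N := by
    rw [hNr]; exact one_le_pow₀ (by linarith)
  have hκlow : 1 / (108 * (d:ℝ) ^ 17) ≤ κ / 18 := by
    have h1 : ((N:ℝ) + 1) * (6 * ((N:ℝ) ^ 2 + 1)) ≤ 24 * (N:ℝ) ^ 3 := by
      have ha : (N:ℝ) + 1 ≤ 2 * N := by linarith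
      have hb : 6 * ((N:ℝ) ^ 2 + 1) ≤ 12 * (N:ℝ) ^ 2 := by nlinarith
      calc ((N:ℝ) + 1) * (6 * ((N:ℝ) ^ 2 + 1)) ≤ (2 * N) * (12 * (N:ℝ) ^ 2) := by gcongr
        _ = _ := by ring
    have h2 : 4 / (d:ℝ) ^ 2 / (24 * (N:ℝ) ^ 3) ≤ κ := by
      rw [hκ]; gcongr
    have h3 : 1 / (108 * (d:ℝ) ^ 17) = 4 / (d:ℝ) ^ 2 / (24 * (N:ℝ) ^ 3) / 18 := by
      rw [hNr]; field_simp; norm_num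
    rw [h3]
    gcongr
  have hκ1 : κ ≤ 18 := by
    rw [hκ, div_le_iff₀ (by positivity), div_le_iff₀ (by positivity)]
    have ha : (1:ℝ) ≤ (N:ℝ) + 1 := by linarith
    have hb : (1:ℝ) ≤ 6 * ((N:ℝ) ^ 2 + 1) := by nlinarith
    have hc' : (1:ℝ) ≤ (d:ℝ) ^ 2 := one_le_pow₀ (by linarith)
    have := one_le_mul_of_one_le_of_one_le ha hb
    have := one_le_mul_of_one_le_of_one_le this hc'
    nlinarith
  have hηX : 8 * l ≤ κ / 18 * X := by
    have h1 : 8 * l * (108 * (d:ℝ) ^ 17) ≤ X := by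
      calc 8 * l * (108 * (d:ℝ) ^ 17) ≤ 8 * l * (108 * (2 * l) ^ 17) := by gcongr
        _ = (864 * 2 ^ 17) * l ^ 18 := by ring
        _ ≤ l * l ^ 18 := by gcongr
        _ = l ^ 19 := by ring
        _ ≤ X := hX19
    calc 8 * l ≤ X / (108 * (d:ℝ) ^ 17) := by rwa [le_div_iff₀ (by positivity)]
      _ = 1 / (108 * (d:ℝ) ^ 17) * X := by ring
      _ ≤ _ := by gcongr
  rcases lt_or_ge c 1 with hc1 | hc1
  · -- trivial bound
    have ha0 : 0 ≤ ∑ x ∈ A, (walkDist step X0 n x).toReal :=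
      Finset.sum_nonneg fun _ _ => ENNReal.toReal_nonneg
    have ha1 : ∑ x ∈ A, (walkDist step X0 n x).toReal ≤ 1 := by
      rw [← CDG.pmf_sum (walkDist step X0 n)]
      exact Finset.sum_le_sum_of_subset_of_nonneg (Finset.subset_univ _)
        fun _ _ _ => ENNReal.toReal_nonneg
    have hb0 : 0 ≤ (A.card : ℝ) / ((p:ℝ) - 1) := by positivity
    have hb1 : (A.card : ℝ) / ((p:ℝ) - 1) ≤ 1 := by
      rw [div_le_one hp1]
      have hsub : A ⊆ Finset.univ.erase 0 := fun x hx => by simp [hA x hx]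
      have h1 := Finset.card_le_card hsub
      rw [Finset.card_erase_of_mem (Finset.mem_univ _), Finset.card_univ, ZMod.card] at h1
      have h2 : A.card + 1 ≤ p := by omega
      have h3 : (A.card : ℝ) + 1 ≤ p := by exact_mod_cast h2
      linarith
    have habs : |(∑ x ∈ A, (walkDist step X0 n x).toReal) - (A.card : ℝ) / ((p : ℝ) - 1)| ≤ 1 := by
      rw [abs_le]; constructor <;> linarith
    have hexp : (1:ℝ) / 2 ≤ Real.exp (-(1 / 2) * c) := by
      have := Real.add_one_le_exp (-(1 / 2) * c)
      linarith
    linarith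
  · have hdec := CDG.decay hγ X0 hX0 (fun n x => (walkDist step X0 n x).toReal)
      (by
        intro x
        simp only [walkDist, Function.iterate_zero, id, PMF.pure_apply]
        split_ifs <;> simp)
      (fun n => CDG.pmf_sum _) (CDG.mu_succ hγ X0 step hstep) κ hκ0 hκ1 hgap n A hA
    set S := (∑ x ∈ A, (walkDist step X0 n x).toReal) - (A.card : ℝ) / ((p : ℝ) - 1) with hS
    have hXpos : 0 < X := Real.exp_pos _
    have hXl : 2 ≤ X := by
      have : l ≤ l ^ 19 := le_self_pow₀ hl2.le (by norm_num)
      linarith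
    have hn2 : (2:ℝ) ≤ n := by
      have := le_mul_of_one_le_left hXpos.le hc1
      linarith
    have hhalf : (n:ℝ) / 4 ≤ ((n / 2 : ℕ) : ℝ) := by
      have h1 : n ≤ 2 * (n / 2) + 1 := by omega
      have h2 : (n:ℝ) ≤ 2 * ((n / 2 : ℕ) : ℝ) + 1 := by exact_mod_cast h1
      linarith
    have hpow : (1 - κ / 18) ^ (n / 2) ≤ Real.exp (-(2 * c * l)) := by
      have h1 : 1 - κ / 18 ≤ Real.exp (-(κ / 18)) := by
        have := Real.add_one_le_exp (-(κ / 18)); linarith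
      calc (1 - κ / 18) ^ (n / 2) ≤ Real.exp (-(κ / 18)) ^ (n / 2) :=
            pow_le_pow_left₀ (by linarith) h1 _
        _ = Real.exp (((n / 2 : ℕ) : ℝ) * (-(κ / 18))) := by rw [← Real.exp_nat_mul]
        _ ≤ _ := by
          apply Real.exp_le_exp.2
          have h2 : κ / 18 * (n / 4) ≤ κ / 18 * ((n / 2 : ℕ) : ℝ) := by gcongr
          have h3 : κ / 18 * (c * X) ≤ κ / 18 * n := by gcongr
          have h4 : c * (8 * l) ≤ c * (κ / 18 * X) := by gcongr
          have h5 : κ / 18 * (c * X) = c * (κ / 18 * X) := by ring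
          have h6 : κ / 18 * ((n:ℝ) / 4) = κ / 18 * n / 4 := by ring
          linarith
    have hpe : (p:ℝ) = Real.exp l := (Real.exp_log hp0).symm
    have hsq : S ^ 2 ≤ 2 * Real.exp (-c) := by
      calc S ^ 2 ≤ 2 * p * (1 - κ / 18) ^ (n / 2) := hdec
        _ ≤ 2 * p * Real.exp (-(2 * c * l)) := by gcongr
        _ = 2 * Real.exp (l + -(2 * c * l)) := by rw [Real.exp_add, ← hpe]; ring
        _ ≤ 2 * Real.exp (-c) := by
          have h7 : l ≤ c * l := le_mul_of_one_le_left (by linarith) hc1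
          have h8 : c ≤ c * l := le_mul_of_one_le_right hc.le hl2.le
          have h9 : l + -(2 * c * l) ≤ -c := by linarith
          gcongr
    have he : Real.exp (-(1 / 2) * c) ^ 2 = Real.exp (-c) := by
      rw [← Real.exp_nat_mul]; congr 1; push_cast; ring
    rw [one_mul]
    refine abs_le_of_sq_le_sq' ?_ (Real.exp_pos _).le |>.2
    rw [he, mul_pow, sq_abs]
    have := Real.exp_pos (-c)
    nlinarith
end

section
/- There exist absolute constants C1, C2 > 0 with the following property. Let p ≥ 16 be a prime, g a primitive root modulo p, and ind : F_p^* → {1, …, p−1} the discrete logarithm base g (so g^{ind(x)} = x). Let γ ∈ F_p^* have multiplicative order at least exp(C1·log p / log log p). Consider the lazy Markov chain (X_n) on F_p^* started from an arbitrary fixed X_0 ∈ F_p^*, whose one-step transition from a state x is: stay at x with probability 1/2, move to (ind(x) mod p)·γ with probability 1/4, and move to (ind(x) mod p)·γ^{-1} with probability 1/4 (note ind(x) mod p ∈ F_p^* since 1 ≤ ind(x) ≤ p−1). Then for every integer n ≥ exp(C2·log p / log log p), one has (1/2)·max_{A ⊆ F_p^*} |P(X_n ∈ A) − |A|/(p−1)|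 ≤ 1/4. -/
open scoped BigOperators

lemma sep_lemma (w d K : ℕ) (c : ℕ → ℝ) (hc : c d ≠ 0) (hK : 5 ^ d < K) (y : ℕ → ℕ → ℝ)
    (hrec : ∀ k < K, ∀ n, n + d < w → ∑ i ∈ Finset.range (d+1), c i * y k (n + i) = 0)
    (hb : ∀ k < K, ∀ n < w, |y k n| ≤ 2) :
    ∃ k k', k < k' ∧ k' < K ∧ ∀ n < w, |y k n - y k' n| < 1 := by
  classical
  let e : ℕ → ((Fin w → ℝ) →ₗ[ℝ] ℝ) := fun n =>
    if h : n < w then LinearMap.proj (⟨n, h⟩ : Fin w) else 0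
  have he : ∀ n (h : n < w) (f : Fin w → ℝ), e n f = f ⟨n, h⟩ := by
    intro n h f
    simp [e, h]
  let W : Submodule ℝ (Fin w → ℝ) :=
    ⨅ n : {n : ℕ // n + d < w}, LinearMap.ker (∑ i ∈ Finset.range (d+1), c i • e (n.1 + i))
  have hW : ∀ f : Fin w → ℝ, f ∈ W ↔ ∀ n, n + d < w →
      ∑ i ∈ Finset.range (d+1), c i * e (n + i) f = 0 := by
    intro f
    simp [W, Submodule.mem_iInf, LinearMap.mem_ker, LinearMap.sum_apply]
  have hfin : Module.finrank ℝ W ≤ d := by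
    let r : W →ₗ[ℝ] (Fin d → ℝ) := LinearMap.pi (fun i : Fin d => (e i).comp W.subtype)
    have hr : Function.Injective r := by
      rw [← LinearMap.ker_eq_bot, LinearMap.ker_eq_bot']
      rintro ⟨f, hf⟩ h0
      have h1 : ∀ i < d, e i f = 0 := by
        intro i hi
        have := congrFun h0 ⟨i, hi⟩
        simpa [r] using this
      have h2 : ∀ n, n < w → e n f = 0 := by
        intro n
        induction n using Nat.strong_induction_on with
        | _ n ih =>
          intro hn
          by_cases hnd : n < d
          · exact h1 n hnd
          · push Not at hnd
            have h3 := (hW f).1 hf (n - d) (by omega)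
            rw [Finset.sum_range_succ, Finset.sum_eq_zero] at h3
            · rw [Nat.sub_add_cancel hnd] at h3
              simpa [hc] using h3
            · intro i hi
              rw [Finset.mem_range] at hi
              rw [ih (n - d + i) (by omega) (by omega), mul_zero]
      ext n
      have := h2 n.1 n.2
      rw [he _ n.2] at this
      simpa using this
    have := LinearMap.finrank_le_finrank_of_injective hr
    simpa using this
  by_contra hcon
  push Not at hcon
  have hmem : ∀ k : Fin K, (fun n : Fin w => y k n) ∈ W := by
    intro k
    rw [hW]
    intro n hn
    rw [← hrec k k.2 n hn]
    apply Finset.sum_congr rfl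
    intro i hi
    rw [Finset.mem_range] at hi
    rw [he (n+i) (by omega)]
  let Y : Fin K → W := fun k => ⟨_, hmem k⟩
  have hsep : ∀ k k' : Fin K, k < k' → 1 ≤ ‖Y k - Y k'‖ := by
    intro k k' hkk
    obtain ⟨n, hn, h1⟩ := hcon k k' hkk k'.2
    refine h1.trans ?_
    have := norm_le_pi_norm ((Y k - Y k' : W) : Fin w → ℝ) ⟨n, hn⟩
    simpa [Y] using this
  have hsep' : ∀ k k' : Fin K, k ≠ k' → 1 ≤ ‖Y k - Y k'‖ := by
    intro k k' h
    rcases lt_or_gt_of_ne h with h | h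
    · exact hsep _ _ h
    · rw [norm_sub_rev]; exact hsep _ _ h
  have hinj : Function.Injective Y := by
    intro k k' h
    by_contra hne
    have := hsep' k k' hne
    rw [h] at this
    simp at this
    linarith
  have h5 := Besicovitch.card_le_of_separated (Finset.univ.image Y) (by
      intro z hz
      simp only [Finset.mem_image, Finset.mem_univ, true_and] at hz
      obtain ⟨k, rfl⟩ := hz
      change ‖(fun n : Fin w => y k n)‖ ≤ 2
      rw [pi_norm_le_iff_of_nonneg (by norm_num)]
      intro n
      exact hb k k.2 n n.2) (by
      intro z hz z' hz' hne
      simp only [Finset.mem_image, Finset.mem_univ, true_and] at hz hz'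
      obtain ⟨k, rfl⟩ := hz
      obtain ⟨k', rfl⟩ := hz'
      exact hsep' k k' (fun h => hne (by rw [h])))
  rw [Finset.card_image_of_injective _ hinj, Finset.card_univ, Fintype.card_fin] at h5
  have : (5:ℕ) ^ (Module.finrank ℝ W) ≤ 5 ^ d := Nat.pow_le_pow_right (by norm_num) hfin
  omega

lemma exists_relation (p : ℕ) [Fact p.Prime] (D H : ℕ) (hH : p < (H+1)^(D+1)) (l : ZMod p) :
    ∃ (d : ℕ) (c : ℕ → ℤ), d ≤ D ∧ c d ≠ 0 ∧ ∑ i ∈ Finset.range (d+1), (c i : ZMod p) * l ^ i = 0 ∧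
      ∀ i, |c i| ≤ H := by
  classical
  obtain ⟨a, b, hab, hf⟩ := Fintype.exists_ne_map_eq_of_card_lt
    (fun a : Fin (D+1) → Fin (H+1) => ∑ i, ((a i : ℕ) : ZMod p) * l ^ (i : ℕ))
    (by simpa [ZMod.card] using hH)
  let c : ℕ → ℤ := fun i => if h : i < D + 1 then ((a ⟨i, h⟩ : ℕ) : ℤ) - ((b ⟨i, h⟩ : ℕ) : ℤ) else 0
  have hc0 : ∃ i, i ≤ D ∧ c i ≠ 0 := by
    by_contra hcon
    push Not at hcon
    apply hab
    ext i
    have := hcon i (by omega)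
    simp only [c, i.2, dif_pos] at this
    simp at this
    omega
  have hsum : ∑ i ∈ Finset.range (D+1), (c i : ZMod p) * l ^ i = 0 := by
    rw [Finset.sum_range]
    have : ∀ i : Fin (D+1), (c i : ZMod p) * l ^ (i:ℕ) = ((a i : ℕ) : ZMod p) * l ^ (i : ℕ) - ((b i : ℕ) : ZMod p) * l ^ (i : ℕ) := by
      intro i
      simp only [c, i.2, dif_pos]
      push_cast
      ring
    simp only [this, Finset.sum_sub_distrib]
    simpa [sub_eq_zero] using hf
  let d := Nat.findGreatest (fun i => c i ≠ 0) D
  obtain ⟨i, hi, hci⟩ := hc0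
  refine ⟨d, c, Nat.findGreatest_le _, Nat.findGreatest_spec (P := fun i => c i ≠ 0) hi hci, ?_, ?_⟩
  · rw [← hsum]
    apply Finset.sum_subset
    · intro j hj
      have : d ≤ D := Nat.findGreatest_le _
      simp only [Finset.mem_range] at *
      omega
    · intro j hj hj'
      simp only [Finset.mem_range] at hj hj'
      have := Nat.findGreatest_is_greatest (P := fun i => c i ≠ 0) (n := D) (k := j)
        (by change d < j; omega) (by omega)
      simp only [not_not] at this
      rw [this]; simp
  · intro i
    simp only [c]
    split_ifs with h
    · have h1 := (a ⟨i,h⟩).2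
      have h2 := (b ⟨i,h⟩).2
      rw [abs_le]; constructor <;> omega
    · simp

lemma descent (p : ℕ) [Fact p.Prime] (l : ZMod p) (hl : l ≠ 0) (d L : ℕ) (c : ℕ → ℤ) (hc : c d ≠ 0)
    (hrel : ∑ i ∈ Finset.range (d+1), (c i : ZMod p) * l ^ i = 0)
    (hL : ∑ i ∈ Finset.range (d+1), |c i| ≤ L)
    (hord : ∀ k, 0 < k → k ≤ 5 ^ d → l ^ k ≠ 1) :
    ∀ m : ℕ, 2 ^ m * L ≤ p → ∀ b : ZMod p, b ≠ 0 →
      ∃ n < 1 + m * 5 ^ d, (2:ℤ) ^ m ≤ |(b * l ^ n).valMinAbs| := by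
  intro m
  induction m with
  | zero =>
    intro _ b hb
    refine ⟨0, by simp, ?_⟩
    simp only [pow_zero, mul_one]
    apply Int.one_le_abs
    simpa using hb
  | succ m ih =>
    intro hm b hb
    by_contra hcon
    push Not at hcon
    have hLpos : 0 < L := by
      have h1 : |c d| ≤ ∑ i ∈ Finset.range (d+1), |c i| :=
        Finset.single_le_sum (f := fun i => |c i|) (fun i _ => abs_nonneg _) (by simp)
      have h2 := abs_pos.2 hc
      omega
    have hm' : 2 ^ m * L ≤ p := by
      refine le_trans ?_ hm
      rw [pow_succ]; nlinarith [Nat.zero_le (2^m * L)]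
    set w := 1 + m * 5 ^ d with hw
    set x : ℕ → ℤ := fun n => (b * l ^ n).valMinAbs with hx
    have hxc : ∀ n, ((x n : ℤ) : ZMod p) = b * l ^ n := fun n => ZMod.coe_valMinAbs _
    have hbd : ∀ n < w + 5 ^ d, |x n| < 2 ^ (m+1) := by
      intro n hn
      apply hcon
      have : (m+1) * 5 ^ d = m * 5^d + 5^d := by ring
      omega
    have hrecx : ∀ n, n + d < w + 5 ^ d → ∑ i ∈ Finset.range (d+1), c i * x (n + i) = 0 := by
      intro n hn
      apply Int.eq_zero_of_abs_lt_dvd (m := (p:ℤ))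
      · rw [← ZMod.intCast_zmod_eq_zero_iff_dvd]
        push_cast
        have : ∀ i, (c i : ZMod p) * ((x (n+i) : ℤ) : ZMod p) = b * l ^ n * ((c i : ZMod p) * l ^ i) := by
          intro i
          rw [hxc, pow_add]; ring
        simp only [this]
        rw [← Finset.mul_sum, hrel, mul_zero]
      · have hp : (2:ℤ)^(m+1) * L ≤ p := by exact_mod_cast hm
        calc |∑ i ∈ Finset.range (d+1), c i * x (n + i)|
            ≤ ∑ i ∈ Finset.range (d+1), |c i * x (n + i)| := Finset.abs_sum_le_sum_abs _ _
          _ < ∑ i ∈ Finset.range (d+1), |c i| * 2^(m+1) := by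
              apply Finset.sum_lt_sum
              · intro i hi
                rw [Finset.mem_range] at hi
                rw [abs_mul]
                exact mul_le_mul_of_nonneg_left (hbd _ (by omega)).le (abs_nonneg _)
              · refine ⟨d, by simp, ?_⟩
                rw [abs_mul]
                exact mul_lt_mul_of_pos_left (hbd _ (by omega)) (abs_pos.2 hc)
          _ = 2^(m+1) * ∑ i ∈ Finset.range (d+1), |c i| := by
              rw [← Finset.sum_mul, mul_comm]
          _ ≤ 2^(m+1) * L := by gcongr
          _ ≤ p := hp
    have h2pos : (0:ℝ) < 2 ^ m := by positivity
    obtain ⟨k, k', hkk, hk', hclose⟩ := sep_lemma w d (5^d+1) (fun i => (c i : ℝ))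
      (by exact_mod_cast hc) (by omega) (fun k n => (x (k + n) : ℝ) / 2 ^ m)
      (by
        intro k hk n hn
        have := hrecx (k + n) (by omega)
        have h3 : (∑ i ∈ Finset.range (d+1), (c i : ℝ) * (x (k + n + i) : ℝ)) = 0 := by exact_mod_cast this
        simp only [mul_div_assoc', ← add_assoc]
        rw [← Finset.sum_div, h3, zero_div])
      (by
        intro k hk n hn
        have h1 := hbd (k + n) (by omega)
        have h3 : |(x (k+n) : ℝ)| < 2 ^ (m+1) := by exact_mod_cast h1
        rw [abs_div, abs_of_pos h2pos, div_le_iff₀ h2pos]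
        rw [pow_succ] at h3
        linarith)
    have hdiff : ∀ n < w, |x (k' + n) - x (k + n)| < 2 ^ m := by
      intro n hn
      have h1 := hclose n hn
      rw [← sub_div, abs_div, abs_of_pos h2pos, div_lt_one h2pos, abs_sub_comm] at h1
      exact_mod_cast h1
    have hb' : b * (l ^ k' - l ^ k) ≠ 0 := by
      apply mul_ne_zero hb
      intro h0
      apply hord (k' - k) (by omega) (by omega)
      have h1 : l ^ k' = l ^ k * l ^ (k' - k) := by rw [← pow_add]; congr 1; omega
      rw [h1] at h0
      have h2 : l ^ k * (l ^ (k' - k) - 1) = 0 := by rw [← h0]; ring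
      rcases mul_eq_zero.1 h2 with h | h
      · exact absurd h (pow_ne_zero _ hl)
      · exact sub_eq_zero.1 h
    obtain ⟨n, hn, hbig⟩ := ih hm' _ hb'
    have hval : (b * (l ^ k' - l ^ k) * l ^ n).valMinAbs = x (k' + n) - x (k + n) := by
      rw [ZMod.valMinAbs_spec]
      have h1 := abs_lt.1 (hdiff n hn)
      have hp : (2:ℤ)^(m+1) * L ≤ p := by exact_mod_cast hm
      have h3 : (2:ℤ)^(m+1) ≤ p := by
        have : (1:ℤ) ≤ L := by exact_mod_cast hLpos
        nlinarith [pow_pos (show (0:ℤ)<2 by norm_num) (m+1)]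
      rw [pow_succ] at h3
      refine ⟨?_, ?_⟩
      · push_cast
        rw [hxc, hxc, pow_add, pow_add]; ring
      · rw [Set.mem_Ioc]
        constructor <;> linarith
    rw [hval] at hbig
    exact absurd (hdiff n hn) (not_lt.2 hbig)

lemma key_escape (p : ℕ) [Fact p.Prime] (l : ZMod p) (hl : l ≠ 0) (D H : ℕ) (hH : p < (H+1)^(D+1))
    (hH0 : (D+1) * H ≤ p) (hHp : 0 < H)
    (hord : ∀ k, 0 < k → k ≤ 5 ^ D → l ^ k ≠ 1) (b : ZMod p) (hb : b ≠ 0) :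
    ∃ n < 1 + Nat.log 2 p * 5 ^ D, (p:ℝ) ≤ 2 * ((D+1) * H) * |((b * l ^ n).valMinAbs : ℝ)| := by
  obtain ⟨d, c, hd, hc, hrel, hcH⟩ := exists_relation p D H hH l
  have hL : ∑ i ∈ Finset.range (d+1), |c i| ≤ (((D+1)*H : ℕ) : ℤ) := by
    calc ∑ i ∈ Finset.range (d+1), |c i| ≤ ∑ i ∈ Finset.range (d+1), (H:ℤ) :=
          Finset.sum_le_sum (fun i _ => hcH i)
      _ = (d+1) * H := by simp
      _ ≤ (((D+1)*H : ℕ) : ℤ) := by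
        push_cast
        gcongr
  have h5 : 5 ^ d ≤ 5 ^ D := Nat.pow_le_pow_right (by norm_num) hd
  have hLpos : 0 < (D+1) * H := by positivity
  set L := (D+1) * H with hLdef
  set m := Nat.log 2 (p / L) with hm
  have hpL : p / L ≠ 0 := (Nat.div_pos hH0 hLpos).ne'
  have hm1 : 2 ^ m * L ≤ p := by
    have : 2 ^ m ≤ p / L := Nat.pow_log_le_self 2 hpL
    exact (Nat.le_div_iff_mul_le hLpos).1 this
  have hm2 : p < 2 ^ (m+1) * L := by
    have : p / L < 2 ^ (m+1) := Nat.lt_pow_succ_log_self (by norm_num) _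
    exact (Nat.div_lt_iff_lt_mul hLpos).1 this
  obtain ⟨n, hn, hx⟩ := descent p l hl d L c hc hrel hL
    (fun k hk hk' => hord k hk (hk'.trans h5)) m hm1 b hb
  refine ⟨n, ?_, ?_⟩
  · have h1 : m ≤ Nat.log 2 p := Nat.log_mono_right (Nat.div_le_self _ _)
    have := Nat.mul_le_mul h1 h5
    omega
  · have h3 : (p:ℝ) < 2 ^ (m+1) * L := by exact_mod_cast hm2
    have h4 : (2:ℝ) ^ m ≤ |((b * l ^ n).valMinAbs : ℝ)| := by exact_mod_cast hx
    have h5 : (L:ℝ) = (D+1) * H := by rw [hLdef]; push_cast; ring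
    rw [← h5]
    rw [pow_succ] at h3
    have : (0:ℝ) < L := by exact_mod_cast hLpos
    nlinarith

lemma mulLeft_app {p : ℕ} [Fact p.Prime] (l : ZMod p) (hl : l ≠ 0) (x : ZMod p) :
    (Equiv.mulLeft₀ l hl) x = l * x := rfl

noncomputable def hatT {p : ℕ} [Fact p.Prime] (v : ZMod p → ℝ) (ξ : ZMod p) : ℂ :=
  ∑ x, (v x : ℂ) * ZMod.stdAddChar (x * ξ)

lemma parseval {p : ℕ} [Fact p.Prime] (v : ZMod p → ℝ) :
    ∑ ξ, ‖hatT v ξ‖ ^ 2 = p * ∑ x, v x ^ 2 := by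
  classical
  have hkey : (∑ ξ, (‖hatT v ξ‖ ^ 2 : ℂ)) = p * ∑ x, (v x : ℂ) ^ 2 := by
    have h1 : ∀ ξ, (‖hatT v ξ‖ ^ 2 : ℂ) =
        ∑ x, ∑ y, (v x : ℂ) * (v y : ℂ) * ZMod.stdAddChar (ξ * (x - y)) := by
      intro ξ
      rw [← Complex.mul_conj']
      unfold hatT
      rw [map_sum, Finset.sum_mul_sum]
      refine Finset.sum_congr rfl fun x _ => Finset.sum_congr rfl fun y _ => ?_
      rw [map_mul (starRingEnd ℂ), Complex.conj_ofReal, ← AddChar.map_neg_eq_conj]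
      have : ξ * (x - y) = x * ξ + -(y * ξ) := by ring
      rw [this, AddChar.map_add_eq_mul]
      ring
    simp only [h1]
    rw [Finset.sum_comm]
    rw [Finset.mul_sum]
    refine Finset.sum_congr rfl fun x _ => ?_
    rw [Finset.sum_comm]
    simp only [← Finset.mul_sum]
    simp only [AddChar.sum_mulShift _ (ZMod.isPrimitive_stdAddChar p), sub_eq_zero]
    simp [ZMod.card]
    ring
  exact_mod_cast hkey

lemma hatT_shift {p : ℕ} [Fact p.Prime] (v : ZMod p → ℝ) (s ξ : ZMod p) :
    hatT (fun z => v (z + s)) ξ = ZMod.stdAddChar (-(s * ξ)) * hatT v ξ := by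
  unfold hatT
  rw [← Equiv.sum_comp (Equiv.addRight s) (fun x => (v x : ℂ) * ZMod.stdAddChar (x * ξ)), Finset.mul_sum]
  refine Finset.sum_congr rfl fun x _ => ?_
  have : x * ξ = (x + s) * ξ + -(s * ξ) := by ring
  rw [this, AddChar.map_add_eq_mul]
  simp only [Equiv.coe_addRight]
  ring

lemma hatT_mul {p : ℕ} [Fact p.Prime] (v : ZMod p → ℝ) (l ξ : ZMod p) (hl : l ≠ 0) :
    hatT (fun z => v (l * z)) (l * ξ) = hatT v ξ := by
  unfold hatT
  rw [← Equiv.sum_comp (Equiv.mulLeft₀ l hl) (fun x => (v x : ℂ) * ZMod.stdAddChar (x * ξ))]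
  refine Finset.sum_congr rfl fun x _ => ?_
  simp only [mulLeft_app]
  congr 2
  ring

lemma hatT_sub {p : ℕ} [Fact p.Prime] (v w : ZMod p → ℝ) (ξ : ZMod p) :
    hatT (fun z => v z - w z) ξ = hatT v ξ - hatT w ξ := by
  unfold hatT
  rw [← Finset.sum_sub_distrib]
  refine Finset.sum_congr rfl fun x _ => ?_
  push_cast; ring

lemma iter_bound {α : Type*} [Fintype α] (σ : Equiv.Perm α) (f : α → ℝ) (r : ℕ) :
    ∑ x, (f ((σ ^ r) x) - f x) ^ 2 ≤ (r:ℝ) ^ 2 * ∑ x, (f (σ x) - f x) ^ 2 := by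
  have h1 : ∀ x, (f ((σ ^ r) x) - f x) ^ 2 ≤ r * ∑ i ∈ Finset.range r, (f ((σ ^ (i+1)) x) - f ((σ ^ i) x)) ^ 2 := by
    intro x
    have h2 := Finset.sum_range_sub (fun i => f ((σ ^ i) x)) r
    simp only [pow_zero, Equiv.Perm.coe_one, id_eq] at h2
    rw [← h2]
    have := sq_sum_le_card_mul_sum_sq (s := Finset.range r) (f := fun i => f ((σ ^ (i+1)) x) - f ((σ ^ i) x))
    simpa using this
  calc ∑ x, (f ((σ ^ r) x) - f x) ^ 2
      ≤ ∑ x, r * ∑ i ∈ Finset.range r, (f ((σ ^ (i+1)) x) - f ((σ ^ i) x)) ^ 2 :=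
        Finset.sum_le_sum fun x _ => h1 x
    _ = r * ∑ i ∈ Finset.range r, ∑ x, (f ((σ ^ (i+1)) x) - f ((σ ^ i) x)) ^ 2 := by
        rw [← Finset.mul_sum, Finset.sum_comm]
    _ = r * ∑ i ∈ Finset.range r, ∑ x, (f (σ x) - f x) ^ 2 := by
        congr 1
        refine Finset.sum_congr rfl fun i _ => ?_
        rw [← Equiv.sum_comp (σ ^ i) (fun x => (f (σ x) - f x) ^ 2)]
        refine Finset.sum_congr rfl fun x _ => ?_
        rw [pow_succ' σ i]
        rfl
    _ = (r:ℝ) ^ 2 * ∑ x, (f (σ x) - f x) ^ 2 := by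
        simp; ring

lemma mul_iter {p : ℕ} [Fact p.Prime] (l : ZMod p) (hl : l ≠ 0) (f : ZMod p → ℝ) (r : ℕ) :
    ∑ x, (f (l ^ r * x) - f x) ^ 2 ≤ (r:ℝ) ^ 2 * ∑ x, (f (l * x) - f x) ^ 2 := by
  have h1 := iter_bound (Equiv.mulLeft₀ l hl) f r
  have h2 : ∀ (i : ℕ) x, (Equiv.mulLeft₀ l hl ^ i) x = l ^ i * x := by
    intro i x
    induction i with
    | zero => simp
    | succ i ih =>
      rw [pow_succ', Equiv.Perm.mul_apply, ih, mulLeft_app]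
      ring
  simp only [h2, mulLeft_app] at h1
  exact h1

lemma norm_char_sub_one {p : ℕ} [Fact p.Prime] (z : ZMod p) :
    4 * |(z.valMinAbs : ℝ)| / p ≤ ‖(ZMod.stdAddChar z : ℂ) - 1‖ := by
  have hp : (0:ℝ) < p := by exact_mod_cast (Fact.out : p.Prime).pos
  have h1 : (ZMod.stdAddChar z : ℂ) = Complex.exp (Complex.I * ((2 * Real.pi * (z.valMinAbs : ℝ) / p : ℝ) : ℂ)) := by
    conv_lhs => rw [← ZMod.coe_valMinAbs z]
    rw [ZMod.stdAddChar_coe]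
    congr 1
    push_cast
    ring
  rw [h1, Complex.norm_exp_I_mul_ofReal_sub_one]
  have hmem := z.valMinAbs_mem_Ioc
  rw [Set.mem_Ioc] at hmem
  have h2 : |(z.valMinAbs : ℝ)| * 2 ≤ p := by
    have : |z.valMinAbs * 2| ≤ p := abs_le.2 ⟨hmem.1.le, hmem.2⟩
    rw [abs_mul] at this
    exact_mod_cast this
  have h3 : |2 * Real.pi * (z.valMinAbs : ℝ) / p / 2| = Real.pi * |(z.valMinAbs : ℝ)| / p := by
    rw [show 2 * Real.pi * (z.valMinAbs : ℝ) / p / 2 = Real.pi * (z.valMinAbs : ℝ) / p by ring]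
    rw [abs_div, abs_mul, abs_of_pos Real.pi_pos, abs_of_pos hp]
  have h4 := Real.mul_abs_le_abs_sin (x := 2 * Real.pi * (z.valMinAbs : ℝ) / p / 2) (by
    rw [h3, div_le_div_iff₀ hp (by norm_num)]
    nlinarith [Real.pi_pos])
  rw [h3] at h4
  rw [Real.norm_eq_abs, abs_mul, abs_two]
  have h5 : 2 / Real.pi * (Real.pi * |(z.valMinAbs : ℝ)| / p) = 2 * |(z.valMinAbs : ℝ)| / p := by
    field_simp
  rw [h5] at h4
  calc 4 * |(z.valMinAbs : ℝ)| / p = 2 * (2 * |(z.valMinAbs : ℝ)| / p) := by ring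
    _ ≤ _ := by linarith

lemma fourier_gap {p : ℕ} [Fact p.Prime] (v : ZMod p → ℝ) (hv : ∑ x, v x = 0) (s l : ZMod p) (hl : l ≠ 0)
    (κ : ℝ) (N : ℕ)
    (hκ : ∀ ξ : ZMod p, ξ ≠ 0 → ∃ i < N, κ ≤ ‖(ZMod.stdAddChar (-(s * (l ^ i * ξ))) : ℂ) - 1‖ ^ 2) :
    κ * ∑ x, v x ^ 2 ≤ 2 * N * ∑ z, (v (z + s) - v z) ^ 2 + 8 * N ^ 3 * ∑ z, (v (l * z) - v z) ^ 2 := by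
  classical
  have hp : (0:ℝ) < p := by exact_mod_cast (Fact.out : p.Prime).pos
  set m : ZMod p → ℝ := fun ξ => ‖(ZMod.stdAddChar (-(s * ξ)) : ℂ) - 1‖ ^ 2 with hm
  set G : ZMod p → ℂ := hatT v with hG
  set A := ∑ z, (v (z + s) - v z) ^ 2 with hA
  set B := ∑ z, (v (l * z) - v z) ^ 2 with hB
  have hm0 : ∀ ξ, 0 ≤ m ξ := fun ξ => by positivity
  have hm4 : ∀ ξ, m ξ ≤ 4 := by
    intro ξ
    have : ‖(ZMod.stdAddChar (-(s * ξ)) : ℂ) - 1‖ ≤ 2 := by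
      refine (norm_sub_le _ _).trans ?_
      rw [AddChar.norm_apply]; norm_num
    simp only [hm]
    nlinarith [norm_nonneg ((ZMod.stdAddChar (-(s * ξ)) : ℂ) - 1)]
  have hG0 : G 0 = 0 := by
    simp only [hG, hatT, mul_zero, AddChar.map_zero_eq_one, mul_one]
    exact_mod_cast hv
  have hAeq : ∑ ξ, m ξ * ‖G ξ‖ ^ 2 = p * A := by
    rw [hA, ← parseval (fun z => v (z + s) - v z)]
    refine Finset.sum_congr rfl fun ξ _ => ?_
    rw [hatT_sub (fun z => v (z+s)) v, hatT_shift]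
    simp only [hm, hG]
    rw [← mul_pow, ← norm_mul]
    congr 2
    ring
  have hBi : ∀ i : ℕ, ∑ ξ, ‖G ξ - G (l ^ i * ξ)‖ ^ 2 ≤ p * ((i:ℝ) ^ 2 * B) := by
    intro i
    have h1 := mul_iter l hl v i
    have h3 := parseval (fun z => v (l ^ i * z) - v z)
    have hli : l ^ i ≠ 0 := pow_ne_zero _ hl
    rw [← Equiv.sum_comp (Equiv.mulLeft₀ (l ^ i) hli)] at h3
    have h4 : ∀ ξ, ‖hatT (fun z => v (l ^ i * z) - v z) ((Equiv.mulLeft₀ (l ^ i) hli) ξ)‖ ^ 2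
        = ‖G ξ - G (l ^ i * ξ)‖ ^ 2 := by
      intro ξ
      rw [hatT_sub (fun z => v (l ^ i * z)) v, mulLeft_app, hatT_mul _ _ _ hli]
    simp only [h4] at h3
    rw [h3]
    gcongr
  have hi : ∀ i : ℕ, ∑ ξ, m (l ^ i * ξ) * ‖G ξ‖ ^ 2 ≤ 2 * (p * A) + 8 * (p * ((i:ℝ) ^ 2 * B)) := by
    intro i
    have hli : l ^ i ≠ 0 := pow_ne_zero _ hl
    have h1 : ∀ ξ, m (l ^ i * ξ) * ‖G ξ‖ ^ 2 ≤
        2 * (m (l ^ i * ξ) * ‖G (l ^ i * ξ)‖ ^ 2) + 8 * ‖G ξ - G (l ^ i * ξ)‖ ^ 2 := by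
      intro ξ
      have h2 : ‖G ξ‖ ≤ ‖G (l ^ i * ξ)‖ + ‖G ξ - G (l ^ i * ξ)‖ := by
        have := norm_add_le (G (l ^ i * ξ)) (G ξ - G (l ^ i * ξ))
        simpa using this
      have h3 : ‖G ξ‖ ^ 2 ≤ 2 * ‖G (l ^ i * ξ)‖ ^ 2 + 2 * ‖G ξ - G (l ^ i * ξ)‖ ^ 2 := by
        nlinarith [norm_nonneg (G ξ), sq_nonneg (‖G (l ^ i * ξ)‖ - ‖G ξ - G (l ^ i * ξ)‖)]
      have h4 := hm0 (l ^ i * ξ)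
      have h5 := hm4 (l ^ i * ξ)
      nlinarith [mul_le_mul_of_nonneg_left h3 h4, mul_le_mul_of_nonneg_right h5 (sq_nonneg ‖G ξ - G (l ^ i * ξ)‖)]
    refine (Finset.sum_le_sum fun ξ _ => h1 ξ).trans ?_
    rw [Finset.sum_add_distrib, ← Finset.mul_sum, ← Finset.mul_sum]
    have h6 : ∑ ξ, m (l ^ i * ξ) * ‖G (l ^ i * ξ)‖ ^ 2 = p * A := by
      rw [← hAeq, ← Equiv.sum_comp (Equiv.mulLeft₀ (l ^ i) hli) (fun ξ => m ξ * ‖G ξ‖ ^ 2)]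
      simp
    rw [h6]
    have := hBi i
    linarith
  have hB0 : 0 ≤ B := Finset.sum_nonneg fun _ _ => sq_nonneg _
  have hlow : κ * (p * ∑ x, v x ^ 2) ≤ ∑ i ∈ Finset.range N, ∑ ξ, m (l ^ i * ξ) * ‖G ξ‖ ^ 2 := by
    rw [← parseval, Finset.sum_comm, Finset.mul_sum]
    refine Finset.sum_le_sum fun ξ _ => ?_
    rw [← Finset.sum_mul]
    by_cases hξ : ξ = 0
    · rw [hξ]
      change κ * ‖G 0‖ ^ 2 ≤ _ * ‖G 0‖ ^ 2
      rw [hG0]; simp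
    · obtain ⟨i, hiN, hik⟩ := hκ ξ hξ
      apply mul_le_mul_of_nonneg_right _ (sq_nonneg _)
      refine hik.trans ?_
      exact Finset.single_le_sum (f := fun i => m (l ^ i * ξ)) (fun i _ => hm0 _) (Finset.mem_range.2 hiN)
  have hup : ∑ i ∈ Finset.range N, ∑ ξ, m (l ^ i * ξ) * ‖G ξ‖ ^ 2 ≤ N * (2 * (p * A) + 8 * (p * ((N:ℝ) ^ 2 * B))) := by
    calc _ ≤ ∑ i ∈ Finset.range N, (2 * (p * A) + 8 * (p * ((N:ℝ) ^ 2 * B))) := by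
          refine Finset.sum_le_sum fun i hiN => (hi i).trans ?_
          have : (i:ℝ) ≤ N := by exact_mod_cast (Finset.mem_range.1 hiN).le
          gcongr
      _ = _ := by rw [Finset.sum_const, Finset.card_range, nsmul_eq_mul]
  have hfin := hlow.trans hup
  have : p * (κ * ∑ x, v x ^ 2) ≤ p * (2 * N * A + 8 * N ^ 3 * B) := by
    calc p * (κ * ∑ x, v x ^ 2) = κ * (p * ∑ x, v x ^ 2) := by ring
      _ ≤ _ := hfin
      _ = _ := by ring
  exact le_of_mul_le_mul_left this hp

lemma sum_powers {p : ℕ} [Fact p.Prime] {g : ZMod p} (hg : IsPrimitiveRoot g (p-1)) (F : ZMod p → ℝ)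
    (hF : F 0 = 0) (b : ℕ) : ∑ x, F x = ∑ a ∈ Finset.range (p-1), F (g ^ (b + a)) := by
  classical
  have hp := (Fact.out : p.Prime)
  have hp1 : 0 < p - 1 := by have := hp.two_le; omega
  have hg0 : g ≠ 0 := hg.ne_zero hp1.ne'
  have hinj : Set.InjOn (fun a => g ^ (b + a)) (Finset.range (p-1) : Set ℕ) := by
    intro a ha a' ha' h
    simp only [Finset.coe_range, Set.mem_Iio] at ha ha'
    simp only [pow_add] at h
    exact hg.pow_inj ha ha' (mul_left_cancel₀ (pow_ne_zero _ hg0) h)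
  have himg : (Finset.range (p-1)).image (fun a => g ^ (b + a)) = Finset.univ.erase 0 := by
    apply Finset.eq_of_subset_of_card_le
    · intro x hx
      simp only [Finset.mem_image] at hx
      obtain ⟨a, _, rfl⟩ := hx
      simp [hg0]
    · rw [Finset.card_image_of_injOn hinj, Finset.card_erase_of_mem (Finset.mem_univ _), Finset.card_univ, ZMod.card]
      simp
  rw [← Finset.sum_image (f := F) hinj, himg]
  rw [← Finset.add_sum_erase _ _ (Finset.mem_univ (0 : ZMod p)), hF, zero_add]

lemma sum_block (F : ℕ → ℝ) (s R : ℕ) :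
    ∑ r ∈ Finset.range R, ∑ a ∈ Finset.range s, F (a + r * s) = ∑ a ∈ Finset.range (R * s), F a := by
  induction R with
  | zero => simp
  | succ R ih =>
    rw [Finset.sum_range_succ, ih, Nat.succ_mul, Finset.sum_range_add]
    congr 1
    refine Finset.sum_congr rfl fun a _ => by rw [add_comm]

lemma mass_bound {p : ℕ} [Fact p.Prime] {g : ZMod p} (hg : IsPrimitiveRoot g (p-1)) (u : ZMod p → ℝ)
    (hu : u 0 = 0) (s R : ℕ) (hRs : R * s ≤ p - 1) (hR : 1 ≤ R) (δ : ℝ)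
    (hδ : ∑ x, (u (g ^ s * x) - u x) ^ 2 ≤ δ) (b : ℕ) :
    ∑ a ∈ Finset.range s, u (g ^ (b + a)) ^ 2 ≤ 2 / R * ∑ x, u x ^ 2 + 2 * R ^ 2 * δ := by
  have hp := (Fact.out : p.Prime)
  have hp1 : 0 < p - 1 := by have := hp.two_le; omega
  have hg0 : g ≠ 0 := hg.ne_zero hp1.ne'
  have hδ0 : 0 ≤ δ := le_trans (Finset.sum_nonneg fun _ _ => sq_nonneg _) hδ
  have hs : s ≤ p - 1 := le_trans (by nlinarith) hRs
  have hRpos : (0:ℝ) < R := by exact_mod_cast hR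
  have h1 : ∀ r ∈ Finset.range R, ∑ a ∈ Finset.range s, u (g ^ (b + a)) ^ 2 ≤
      2 * ∑ a ∈ Finset.range s, u (g ^ (b + (a + r * s))) ^ 2 + 2 * (R ^ 2 * δ) := by
    intro r hr
    have hrR : (r:ℝ) ≤ R := by exact_mod_cast (Finset.mem_range.1 hr).le
    have h2 := mul_iter (g ^ s) (pow_ne_zero s hg0) u r
    have h3 : ∑ a ∈ Finset.range s, (u (g ^ (b + (a + r * s))) - u (g ^ (b + a))) ^ 2 ≤ R ^ 2 * δ := by
      calc _ ≤ ∑ a ∈ Finset.range (p-1), (u (g ^ (b + (a + r * s))) - u (g ^ (b + a))) ^ 2 := by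
            apply Finset.sum_le_sum_of_subset_of_nonneg
            · exact Finset.range_mono hs
            · intros; positivity
        _ = ∑ x, (u ((g ^ s) ^ r * x) - u x) ^ 2 := by
            rw [sum_powers hg (fun x => (u ((g ^ s) ^ r * x) - u x) ^ 2) (by simp) b]
            refine Finset.sum_congr rfl fun a _ => ?_
            rw [← pow_mul, ← pow_add]
            ring_nf
        _ ≤ (r:ℝ) ^ 2 * ∑ x, (u (g ^ s * x) - u x) ^ 2 := h2
        _ ≤ R ^ 2 * δ := by gcongr
    have h4 : ∑ a ∈ Finset.range s, u (g ^ (b + a)) ^ 2 ≤ ∑ a ∈ Finset.range s,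
        (2 * u (g ^ (b + (a + r * s))) ^ 2 + 2 * (u (g ^ (b + (a + r * s))) - u (g ^ (b + a))) ^ 2) := by
      refine Finset.sum_le_sum fun a _ => ?_
      nlinarith [sq_nonneg (2 * u (g ^ (b + (a + r * s))) - u (g ^ (b + a)))]
    rw [Finset.sum_add_distrib, ← Finset.mul_sum, ← Finset.mul_sum] at h4
    linarith
  have h5 := Finset.sum_le_sum h1
  rw [Finset.sum_const, Finset.card_range, nsmul_eq_mul, Finset.sum_add_distrib, ← Finset.mul_sum,
    sum_block (fun a => u (g ^ (b + a)) ^ 2), Finset.sum_const, Finset.card_range, nsmul_eq_mul] at h5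
  have h6 : ∑ a ∈ Finset.range (R * s), u (g ^ (b + a)) ^ 2 ≤ ∑ x, u x ^ 2 := by
    rw [sum_powers hg (fun x => u x ^ 2) (by simp [hu]) b]
    apply Finset.sum_le_sum_of_subset_of_nonneg
    · exact Finset.range_mono hRs
    · intros; positivity
  have h7 : R * ∑ a ∈ Finset.range s, u (g ^ (b + a)) ^ 2 ≤ R * (2 / R * ∑ x, u x ^ 2 + 2 * R ^ 2 * δ) := by
    have : R * (2 / R * ∑ x, u x ^ 2 + 2 * R ^ 2 * δ) = 2 * ∑ x, u x ^ 2 + R * (2 * (R ^ 2 * δ)) := by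
      field_simp
    rw [this]
    linarith
  exact le_of_mul_le_mul_left h7 hRpos

lemma sum_zmod_range {p : ℕ} [Fact p.Prime] (f : ZMod p → ℝ) :
    ∑ z, f z = ∑ a ∈ Finset.range p, f (a : ZMod p) := by
  symm
  apply Finset.sum_bij (fun (a : ℕ) _ => (a : ZMod p))
  · simp
  · intro a ha b hb h
    have := congrArg ZMod.val h
    rw [Finset.mem_range] at ha hb
    rwa [ZMod.val_natCast_of_lt ha, ZMod.val_natCast_of_lt hb] at this
  · intro z _
    exact ⟨z.val, Finset.mem_range.2 (ZMod.val_lt z), by simp⟩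
  · simp

noncomputable def phi {p : ℕ} (g : ZMod p) (z : ZMod p) : ZMod p :=
  if z = 0 then 0 else g ^ z.val

lemma phi_nat {p : ℕ} [Fact p.Prime] (g : ZMod p) (a : ℕ) (h1 : 1 ≤ a) (h2 : a < p) :
    phi g (a : ZMod p) = g ^ a := by
  unfold phi
  have h3 : (a : ZMod p).val = a := ZMod.val_natCast_of_lt h2
  have h4 : (a : ZMod p) ≠ 0 := by
    intro h
    rw [h] at h3
    simp at h3
    omega
  rw [if_neg h4, h3]

lemma shift_bound {p : ℕ} [Fact p.Prime] {g : ZMod p} (hg : IsPrimitiveRoot g (p-1)) (u : ZMod p → ℝ)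
    (hu : u 0 = 0) (s : ℕ) (hs : 1 ≤ s) (hsp : s < p) (δ : ℝ)
    (hδ : ∑ x, (u (g ^ s * x) - u x) ^ 2 ≤ δ) :
    ∑ z, (u (phi g (z + s)) - u (phi g z)) ^ 2 ≤ δ + 2 * (∑ a ∈ Finset.range s, u (g ^ (p - s + a)) ^ 2 +
      ∑ a ∈ Finset.range s, u (g ^ (1 + a)) ^ 2) := by
  set V : ℕ → ℝ := fun a => u (phi g (a : ZMod p)) with hV
  have hV0 : V 0 = 0 := by simp [hV, phi, hu]
  have hV1 : ∀ a, 1 ≤ a → a < p → V a = u (g ^ a) := by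
    intro a h1 h2
    simp only [hV, phi_nat g a h1 h2]
  have hVp : ∀ a, V (p + a) = V a := by
    intro a; simp [hV]
  obtain ⟨q, hq⟩ : ∃ q, p = 1 + q + s := ⟨p - s - 1, by omega⟩
  have hsplit : ∀ f : ℕ → ℝ, ∑ a ∈ Finset.range p, f a =
      f 0 + ∑ a ∈ Finset.range q, f (1 + a) + ∑ a ∈ Finset.range s, f (p - s + a) := by
    intro f
    have h1 : p - s = 1 + q := by omega
    rw [h1]
    have : Finset.range p = Finset.range (1 + q + s) := by rw [← hq]
    rw [this, Finset.sum_range_add, Finset.sum_range_add]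
    simp
  have e1 : ∑ z, (u (phi g (z + s)) - u (phi g z)) ^ 2 = ∑ a ∈ Finset.range p, (V (a + s) - V a) ^ 2 := by
    rw [sum_zmod_range]
    simp [hV]
  rw [e1, hsplit]
  have e2 : (V (0 + s) - V 0) ^ 2 = u (g ^ s) ^ 2 := by
    rw [hV0, zero_add, hV1 s hs hsp, sub_zero]
  have e3 : ∑ a ∈ Finset.range q, (V (1 + a + s) - V (1 + a)) ^ 2 ≤ δ := by
    refine le_trans ?_ hδ
    rw [sum_powers hg (fun x => (u (g ^ s * x) - u x) ^ 2) (by simp) 1]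
    calc _ = ∑ a ∈ Finset.range q, (u (g ^ s * g ^ (1 + a)) - u (g ^ (1 + a))) ^ 2 := by
          refine Finset.sum_congr rfl fun a ha => ?_
          rw [Finset.mem_range] at ha
          rw [hV1 (1 + a + s) (by omega) (by omega), hV1 (1 + a) (by omega) (by omega), ← pow_add, add_comm s]
      _ ≤ _ := by
          apply Finset.sum_le_sum_of_subset_of_nonneg
          · exact Finset.range_mono (by omega)
          · intros; positivity
  have e4 : ∑ a ∈ Finset.range s, (V (p - s + a + s) - V (p - s + a)) ^ 2 ≤
      2 * ∑ a ∈ Finset.range s, V a ^ 2 + 2 * ∑ a ∈ Finset.range s, u (g ^ (p - s + a)) ^ 2 := by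
    rw [Finset.mul_sum, Finset.mul_sum, ← Finset.sum_add_distrib]
    refine Finset.sum_le_sum fun a ha => ?_
    rw [Finset.mem_range] at ha
    have : p - s + a + s = p + a := by omega
    rw [this, hVp, hV1 (p - s + a) (by omega) (by omega)]
    nlinarith [sq_nonneg (V a + u (g ^ (p - s + a)))]
  have e5 : ∑ a ∈ Finset.range s, V a ^ 2 + u (g ^ s) ^ 2 = ∑ a ∈ Finset.range s, u (g ^ (1 + a)) ^ 2 := by
    have h1 := Finset.sum_range_succ (fun a => V a ^ 2) s
    rw [Finset.sum_range_succ' (fun a => V a ^ 2) s, hV0, hV1 s hs hsp] at h1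
    rw [← h1]
    simp only [ne_eq, OfNat.ofNat_ne_zero, not_false_eq_true, zero_pow, add_zero]
    refine Finset.sum_congr rfl fun a ha => ?_
    rw [Finset.mem_range] at ha
    rw [hV1 (a+1) (by omega) (by omega), add_comm]
  rw [e2]
  nlinarith [sq_nonneg (u (g ^ s))]

lemma phi_bijective {p : ℕ} [Fact p.Prime] {g : ZMod p} {ind : ZMod p → ℕ}
    (hind : ∀ x : ZMod p, x ≠ 0 → 1 ≤ ind x ∧ ind x ≤ p - 1 ∧ g ^ ind x = x) :
    Function.Bijective (phi g) := by
  have hp := (Fact.out : p.Prime).two_le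
  rw [← Finite.surjective_iff_bijective]
  intro x
  by_cases hx : x = 0
  · exact ⟨0, by simp [phi, hx]⟩
  · obtain ⟨h1, h2, h3⟩ := hind x hx
    exact ⟨ind x, by rw [phi_nat g _ h1 (by omega), h3]⟩

lemma exists_small_shift {p : ℕ} [Fact p.Prime] {g : ZMod p} {ind : ZMod p → ℕ}
    (hind : ∀ x : ZMod p, x ≠ 0 → 1 ≤ ind x ∧ ind x ≤ p - 1 ∧ g ^ ind x = x)
    (l : ZMod p) (hl : l ≠ 0) (J : ℕ) (hJ : 1 ≤ J) (hord : ∀ k, 0 < k → k ≤ J → l ^ k ≠ 1) :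
    ∃ j s : ℕ, j ≤ J ∧ 1 ≤ s ∧ s ≤ p / J ∧ (l ^ j = g ^ s ∨ g ^ s * l ^ j = 1) := by
  have hp := (Fact.out : p.Prime).two_le
  have hq : 0 < p / J + 1 := Nat.succ_pos _
  have hlk : ∀ k, l ^ k ≠ 0 := fun k => pow_ne_zero _ hl
  obtain ⟨a, ha, b, hb, hab, hf⟩ := Finset.exists_ne_map_eq_of_card_lt_of_maps_to
    (s := Finset.range (J+1)) (t := Finset.range J) (by simp)
    (f := fun j => ind (l ^ j) / (p / J + 1)) (by
      intro j _
      simp only [Finset.coe_range, Set.mem_Iio]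
      rw [Nat.div_lt_iff_lt_mul hq]
      have h1 := (hind _ (hlk j)).2.1
      have h2 := Nat.lt_mul_div_succ p (show 0 < J by omega)
      omega)
  wlog hlt : a < b generalizing a b
  · exact this b hb a ha hab.symm hf.symm (by omega)
  simp only [Finset.mem_range] at ha hb
  obtain ⟨a1, a2, a3⟩ := hind _ (hlk a)
  obtain ⟨b1, b2, b3⟩ := hind _ (hlk b)
  have hne : ind (l ^ a) ≠ ind (l ^ b) := by
    intro h
    rw [h, b3] at a3
    apply hord (b - a) (by omega) (by omega)
    have h1 : l ^ b = l ^ a * l ^ (b - a) := by rw [← pow_add]; congr 1; omega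
    rw [h1] at a3
    exact (mul_eq_left₀ (hlk a)).1 a3
  have hg0 : g ≠ 0 := by
    rintro rfl
    rw [zero_pow (by omega)] at a3
    exact hlk a a3.symm
  have hb' : l ^ b = l ^ a * l ^ (b - a) := by rw [← pow_add]; congr 1; omega
  have ma := Nat.div_add_mod (ind (l ^ a)) (p / J + 1)
  have mb := Nat.div_add_mod (ind (l ^ b)) (p / J + 1)
  have la := Nat.mod_lt (ind (l ^ a)) hq
  have lb := Nat.mod_lt (ind (l ^ b)) hq
  rw [hf] at ma
  rcases lt_or_gt_of_ne hne with h | h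
  · refine ⟨b - a, ind (l ^ b) - ind (l ^ a), by omega, by omega, by omega, Or.inl ?_⟩
    have h1 : g ^ ind (l ^ b) = g ^ ind (l ^ a) * g ^ (ind (l ^ b) - ind (l ^ a)) := by
      rw [← pow_add]; congr 1; omega
    rw [b3, a3] at h1
    exact mul_left_cancel₀ (hlk a) (hb'.symm.trans h1)
  · refine ⟨b - a, ind (l ^ a) - ind (l ^ b), by omega, by omega, by omega, Or.inr ?_⟩
    have h1 : g ^ ind (l ^ a) = g ^ ind (l ^ b) * g ^ (ind (l ^ a) - ind (l ^ b)) := by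
      rw [← pow_add]; congr 1; omega
    rw [b3, a3] at h1
    apply mul_left_cancel₀ (hlk a)
    rw [mul_one]
    refine Eq.trans ?_ h1.symm
    rw [mul_left_comm, ← hb', mul_comm]

lemma add_sq_sum {α : Type*} [Fintype α] (a b c : α → ℝ) (E : ℝ) (h1 : ∑ x, (a x - b x) ^ 2 ≤ E)
    (h2 : ∑ x, (a x - c x) ^ 2 ≤ E) : ∑ x, (b x - c x) ^ 2 ≤ 4 * E := by
  have : ∑ x, (b x - c x) ^ 2 ≤ ∑ x, (2 * (a x - b x) ^ 2 + 2 * (a x - c x) ^ 2) := by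
    refine Finset.sum_le_sum fun x _ => ?_
    nlinarith [sq_nonneg ((a x - b x) + (a x - c x))]
  rw [Finset.sum_add_distrib, ← Finset.mul_sum, ← Finset.mul_sum] at this
  linarith

lemma poincare {p : ℕ} [Fact p.Prime] {g : ZMod p} (hg : IsPrimitiveRoot g (p-1)) {ind : ZMod p → ℕ}
    (hind : ∀ x : ZMod p, x ≠ 0 → 1 ≤ ind x ∧ ind x ≤ p - 1 ∧ g ^ ind x = x)
    (c : ZMod p) (hc : c ≠ 0) (u : ZMod p → ℝ) (hu : u 0 = 0) (hsum : ∑ x, u x = 0) (E : ℝ)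
    (h1 : ∑ y, (u (phi g (c⁻¹ * y)) - u y) ^ 2 ≤ E)
    (h2 : ∑ y, (u (phi g (c * y)) - u y) ^ 2 ≤ E)
    (D H N L R : ℕ) (hH : p < (H+1)^(D+1)) (hHpos : 0 < H) (hL : L = (D+1) * H)
    (hN : N = 1 + Nat.log 2 p * 5 ^ D) (hR : R = 8 * N * L ^ 2)
    (hord : ∀ k, 0 < k → k ≤ 2 * R → (c ^ 2) ^ k ≠ 1) (h5 : 5 ^ D ≤ 2 * R) (hLp : L ≤ p) :
    ∑ x, u x ^ 2 ≤ 160 * L ^ 2 * N ^ 3 * R ^ 4 * E := by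
  have hp := (Fact.out : p.Prime).two_le
  have hE0 : 0 ≤ E := le_trans (Finset.sum_nonneg fun _ _ => sq_nonneg _) h1
  have hl : c ^ 2 ≠ 0 := pow_ne_zero _ hc
  have hLpos : 0 < L := by rw [hL]; positivity
  have hNpos : 0 < N := by rw [hN]; positivity
  have hRpos : 0 < R := by rw [hR]; positivity
  have k1 : ∑ z, (u (phi g z) - u (c * z)) ^ 2 ≤ E := by
    rw [← Equiv.sum_comp (Equiv.mulLeft₀ c hc)] at h1
    simpa [mulLeft_app, hc] using h1
  have k2 : ∑ z, (u (phi g z) - u (c⁻¹ * z)) ^ 2 ≤ E := by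
    rw [← Equiv.sum_comp (Equiv.mulLeft₀ c⁻¹ (inv_ne_zero hc))] at h2
    simpa [mulLeft_app, hc] using h2
  have k3 : ∑ x, (u (c ^ 2 * x) - u x) ^ 2 ≤ 4 * E := by
    have := add_sq_sum _ _ _ E k1 k2
    rw [← Equiv.sum_comp (Equiv.mulLeft₀ c hc)] at this
    simpa [mulLeft_app, hc, pow_two, mul_assoc] using this
  have k4 : ∑ z, (u (phi g (c ^ 2 * z)) - u (phi g z)) ^ 2 ≤ 4 * E := by
    have k5 : ∑ z, (u (c * z) - u (phi g (c ^ 2 * z))) ^ 2 ≤ E := by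
      rw [← Equiv.sum_comp (Equiv.mulLeft₀ c hc)] at h2
      simp only [mulLeft_app] at h2
      refine le_trans (le_of_eq ?_) h2
      refine Finset.sum_congr rfl fun z _ => ?_
      rw [pow_two c, mul_assoc]; ring
    have k6 : ∑ z, (u (c * z) - u (phi g z)) ^ 2 ≤ E := by
      refine le_trans (le_of_eq ?_) k1
      refine Finset.sum_congr rfl fun z _ => ?_
      ring
    exact add_sq_sum _ _ _ E k5 k6
  obtain ⟨j, s, hj, hs1, hs2, hjs⟩ := exists_small_shift hind (c ^ 2) hl (2 * R) (by omega) hord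
  have hRs' : 2 * (R * s) ≤ p := by
    have := (Nat.le_div_iff_mul_le (by omega)).1 hs2
    nlinarith
  have hRs : R * s ≤ p - 1 := by omega
  have hsp : s < p := by
    have : s ≤ R * s := Nat.le_mul_of_pos_left _ hRpos
    omega
  set δ : ℝ := (2 * R) ^ 2 * (4 * E) with hδdef
  have hδ : ∑ x, (u (g ^ s * x) - u x) ^ 2 ≤ δ := by
    have m1 : ∑ x, (u ((c ^ 2) ^ j * x) - u x) ^ 2 ≤ δ := by
      refine (mul_iter (c ^ 2) hl u j).trans ?_
      have : (j:ℝ) ≤ 2 * R := by exact_mod_cast hj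
      rw [hδdef]
      gcongr
    rcases hjs with h | h
    · rw [← h]; exact m1
    · refine le_trans (le_of_eq ?_) m1
      rw [← Equiv.sum_comp (Equiv.mulLeft₀ _ (pow_ne_zero j hl))]
      refine Finset.sum_congr rfl fun x _ => ?_
      rw [mulLeft_app, ← mul_assoc, h, one_mul]
      ring
  have hm1 := mass_bound hg u hu s R hRs hRpos δ hδ (p - s)
  have hm2 := mass_bound hg u hu s R hRs hRpos δ hδ 1
  have hsh := shift_bound hg u hu s hs1 hsp δ hδ
  have hs0 : (s : ZMod p) ≠ 0 := by
    intro h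
    rw [ZMod.natCast_eq_zero_iff] at h
    exact absurd (Nat.le_of_dvd hs1 h) (by omega)
  have hbij := phi_bijective hind
  let φ : Equiv.Perm (ZMod p) := Equiv.ofBijective _ hbij
  have hv1 : ∑ z, u (phi g z) = 0 := by
    rw [← hsum]; exact Equiv.sum_comp φ u
  have hv2 : ∑ z, u (phi g z) ^ 2 = ∑ x, u x ^ 2 := Equiv.sum_comp φ (fun x => u x ^ 2)
  have hLR : (0:ℝ) < L := by exact_mod_cast hLpos
  have hpR : (0:ℝ) < p := by exact_mod_cast (by omega : 0 < p)
  have hgap := fourier_gap (fun z => u (phi g z)) hv1 (s : ZMod p) (c ^ 2) hl (4 / (L:ℝ) ^ 2) N (by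
    intro ξ hξ
    obtain ⟨n, hn, hx⟩ := key_escape p (c ^ 2) hl D H hH (by rw [← hL]; exact hLp) hHpos
      (fun k hk hk' => hord k hk (hk'.trans h5)) (-(s * ξ)) (by simp [hs0, hξ])
    refine ⟨n, by rw [hN]; exact hn, ?_⟩
    have e1 : -((s : ZMod p) * ((c ^ 2) ^ n * ξ)) = -(s * ξ) * (c ^ 2) ^ n := by ring
    rw [e1]
    have e2 := norm_char_sub_one (-((s : ZMod p) * ξ) * (c ^ 2) ^ n)
    have e3 : (L:ℝ) = (D + 1) * H := by rw [hL]; push_cast; ring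
    rw [← e3] at hx
    have e4 : 2 / (L:ℝ) ≤ 4 * |((-((s : ZMod p) * ξ) * (c ^ 2) ^ n).valMinAbs : ℝ)| / p := by
      rw [div_le_div_iff₀ hLR hpR]
      linarith
    have e5 : 4 / (L:ℝ) ^ 2 = (2 / (L:ℝ)) ^ 2 := by ring
    rw [e5]
    gcongr
    exact e4.trans e2)
  simp only [hv2] at hgap
  set U := ∑ x, u x ^ 2 with hU
  set A := ∑ z, (u (phi g (z + s)) - u (phi g z)) ^ 2 with hA
  have hRR : (1:ℝ) ≤ R := by exact_mod_cast hRpos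
  have hNN : (1:ℝ) ≤ N := by exact_mod_cast hNpos
  have hRe : (R:ℝ) = 8 * N * L ^ 2 := by rw [hR]; push_cast; ring
  have hδ0 : 0 ≤ δ := by positivity
  have hA' : A ≤ 8 / R * U + 9 * R ^ 2 * δ := by
    have : δ ≤ R ^ 2 * δ := by
      have : (1:ℝ) ≤ R ^ 2 := one_le_pow₀ hRR
      nlinarith
    have e : 8 / (R:ℝ) * U = 4 * (2 / R * U) := by ring
    rw [e]
    linarith
  have hNA : 2 * N * A ≤ 2 * N * (8 / R * U + 9 * R ^ 2 * δ) := by gcongr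
  have hid : 2 * N * (8 / R * U) = 2 / (L:ℝ) ^ 2 * U := by
    rw [hRe]
    field_simp
  have hfin : 2 / (L:ℝ) ^ 2 * U ≤ 320 * N ^ 3 * R ^ 4 * E := by
    have t1 : 8 * (N:ℝ) ^ 3 * ∑ z, (u (phi g (c ^ 2 * z)) - u (phi g z)) ^ 2 ≤ 8 * N ^ 3 * (4 * E) := by gcongr
    have t2 : (N:ℝ) ≤ N ^ 3 := le_self_pow₀ hNN (by norm_num)
    have t3 : (1:ℝ) ≤ R ^ 4 := one_le_pow₀ hRR
    have t4 : 4 / (L:ℝ) ^ 2 * U = 2 / (L:ℝ) ^ 2 * U + 2 / (L:ℝ) ^ 2 * U := by ring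
    have t5 : (N:ℝ) * (R ^ 4 * E) ≤ N ^ 3 * (R ^ 4 * E) := by gcongr
    have t6 : (N:ℝ) ^ 3 * E * 1 ≤ N ^ 3 * E * R ^ 4 := by gcongr
    have t7 : 2 * N * (9 * R ^ 2 * δ) = 288 * ((N:ℝ) * (R ^ 4 * E)) := by rw [hδdef]; ring
    linarith
  have : U = (L:ℝ) ^ 2 / 2 * (2 / (L:ℝ) ^ 2 * U) := by field_simp
  rw [this]
  calc _ ≤ (L:ℝ) ^ 2 / 2 * (320 * N ^ 3 * R ^ 4 * E) := by gcongr
    _ = _ := by ring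

lemma step_toReal {p : ℕ} [Fact p.Prime] (x a b y : ZMod p) :
    ((PMF.map (fun t : Bool × Bool => if t.1 then x else if t.2 then a else b)
      (PMF.uniformOfFintype (Bool × Bool))) y).toReal =
    1/2 * (if y = x then 1 else 0) + 1/4 * (if y = a then 1 else 0) + 1/4 * (if y = b then 1 else 0) := by
  rw [PMF.map_apply, tsum_fintype, ENNReal.toReal_sum (by
    intro t _
    split_ifs <;> simp)]
  rw [Fintype.sum_prod_type]
  simp only [Fintype.sum_bool, PMF.uniformOfFintype_apply]
  have h4 : ((Fintype.card (Bool × Bool) : ENNReal)⁻¹).toReal = 1/4 := by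
    simp
  simp only [apply_ite ENNReal.toReal, h4, ENNReal.toReal_zero]
  simp only [if_true, Bool.false_eq_true, if_false]
  split_ifs <;> norm_num

lemma bind_toReal {p : ℕ} [Fact p.Prime] (μ : PMF (ZMod p)) (f : ZMod p → PMF (ZMod p)) (y : ZMod p) :
    (μ.bind f y).toReal = ∑ x, (μ x).toReal * (f x y).toReal := by
  rw [PMF.bind_apply, tsum_fintype, ENNReal.toReal_sum (by
    intro x _
    exact ENNReal.mul_ne_top (PMF.apply_ne_top _ _) (PMF.apply_ne_top _ _))]
  simp only [ENNReal.toReal_mul]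

lemma sum_pre {p : ℕ} [Fact p.Prime] {g : ZMod p} {ind : ZMod p → ℕ}
    (hind : ∀ x : ZMod p, x ≠ 0 → 1 ≤ ind x ∧ ind x ≤ p - 1 ∧ g ^ ind x = x)
    (w : ZMod p → ℝ) (hw : w 0 = 0) (c : ZMod p) (hc : c ≠ 0) (y : ZMod p) :
    ∑ x, w x * (if y = (ind x : ZMod p) * c then 1 else 0) = w (phi g (c⁻¹ * y)) := by
  have hp := (Fact.out : p.Prime).two_le
  have hphi : ∀ x, x ≠ 0 → phi g (ind x : ZMod p) = x := by
    intro x hx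
    obtain ⟨h1, h2, h3⟩ := hind x hx
    rw [phi_nat g _ h1 (by omega), h3]
  rw [Finset.sum_eq_single (phi g (c⁻¹ * y))]
  · by_cases h0 : phi g (c⁻¹ * y) = 0
    · rw [h0, hw]; simp
    · have h1 := (phi_bijective hind).1 (hphi _ h0)
      rw [h1, if_pos (by field_simp), mul_one]
  · intro x _ hx
    by_cases h0 : x = 0
    · rw [h0, hw]; simp
    · rw [if_neg, mul_zero]
      intro h
      apply hx
      rw [h, ← hphi x h0]
      congr 1
      rw [hphi x h0]
      field_simp
  · intro h; exact absurd (Finset.mem_univ _) h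

lemma energy_step {p : ℕ} [Fact p.Prime] (u : ZMod p → ℝ) (σ τ : Equiv.Perm (ZMod p)) :
    ∑ y, (1/2 * u y + 1/4 * u (σ y) + 1/4 * u (τ y)) ^ 2 ≤
      ∑ y, u y ^ 2 - 1/8 * (∑ y, (u (σ y) - u y) ^ 2 + ∑ y, (u (τ y) - u y) ^ 2) := by
  have h1 : ∑ y, u (σ y) ^ 2 = ∑ y, u y ^ 2 := Equiv.sum_comp σ (fun y => u y ^ 2)
  have h2 : ∑ y, u (τ y) ^ 2 = ∑ y, u y ^ 2 := Equiv.sum_comp τ (fun y => u y ^ 2)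
  have h3 : ∑ y, (1/2 * u y + 1/4 * u (σ y) + 1/4 * u (τ y)) ^ 2 ≤
      ∑ y, (1/2 * u y ^ 2 + 1/4 * u (σ y) ^ 2 + 1/4 * u (τ y) ^ 2 - 1/8 * ((u (σ y) - u y) ^ 2 + (u (τ y) - u y) ^ 2)) := by
    refine Finset.sum_le_sum fun y _ => ?_
    nlinarith [sq_nonneg (u (σ y) - u (τ y))]
  rw [Finset.sum_sub_distrib, Finset.sum_add_distrib, Finset.sum_add_distrib, ← Finset.mul_sum,
    ← Finset.mul_sum, ← Finset.mul_sum, ← Finset.mul_sum, Finset.sum_add_distrib, h1, h2] at h3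
  linarith

set_option maxHeartbeats 1000000 in
lemma numerics (p : ℕ) (hp : 16 ≤ p) :
    ∃ D H N L R : ℕ, p < (H+1)^(D+1) ∧ 0 < H ∧ L = (D+1) * H ∧ N = 1 + Nat.log 2 p * 5 ^ D ∧
      R = 8 * N * L ^ 2 ∧ 5 ^ D ≤ 2 * R ∧ L ≤ R ∧
      (4 * R : ℝ) < Real.exp (21 * Real.log p / Real.log (Real.log p)) ∧
      (160 * L ^ 2 * N ^ 3 * R ^ 4 : ℝ) * (8 * Real.log (4 * p ^ 2)) ≤
        Real.exp (115 * Real.log p / Real.log (Real.log p)) := by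
  have hp16 : (16:ℝ) ≤ p := by exact_mod_cast hp
  have hppos : (0:ℝ) < p := by linarith
  set x := Real.log p with hx
  have hxe : Real.exp 1 ≤ x := by
    have h1 : Real.log 16 ≤ x := Real.log_le_log (by norm_num) hp16
    have h2 : Real.log 16 = 4 * Real.log 2 := by
      rw [show (16:ℝ) = 2 ^ 4 by norm_num, Real.log_pow]; norm_num
    have := Real.log_two_gt_d9
    have := Real.exp_one_lt_d9
    linarith
  have hxpos : 0 < x := lt_of_lt_of_le (Real.exp_pos _) hxe
  set t := Real.log x with ht
  have ht1 : 1 ≤ t := by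
    rw [ht, Real.le_log_iff_exp_le hxpos]; exact hxe
  have hxt : Real.exp t = x := Real.exp_log hxpos
  have htx : t ^ 2 ≤ x := by
    have h1 := Real.quadratic_le_exp_of_nonneg (x := t / 2) (by linarith)
    have h2 : t ≤ Real.exp (t/2) := by nlinarith [sq_nonneg (t - 2)]
    have h3 : Real.exp (t/2) ^ 2 = x := by
      rw [← hxt, ← Real.exp_nat_mul]; congr 1; push_cast; ring
    rw [← h3]
    gcongr
  set Y := x / t with hY
  have hYt : Y * t = x := by rw [hY]; field_simp
  have htY : t ≤ Y := by
    rw [hY, le_div_iff₀ (by linarith)]; nlinarith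
  set y := Real.exp Y with hy
  have hy27 : 2.7 ≤ y := by
    have h1 : Real.exp 1 ≤ y := Real.exp_le_exp.2 (by linarith)
    have := Real.exp_one_gt_d9
    linarith
  have hYy : Y + 1 ≤ y := Real.add_one_le_exp Y
  have hxy : x ≤ y := by rw [← hxt]; exact Real.exp_le_exp.2 htY
  have hy1 : 1 ≤ y := by linarith
  set D := ⌈t⌉₊ with hD
  set H := ⌊y⌋₊ with hH
  have hDt : t ≤ D := Nat.le_ceil t
  have hDt' : (D:ℝ) < t + 1 := Nat.ceil_lt_add_one (by linarith)
  have hHy : (H:ℝ) ≤ y := Nat.floor_le (by linarith)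
  have hHy' : y < H + 1 := Nat.lt_floor_add_one y
  have hHpos : 0 < H := Nat.floor_pos.2 hy1
  have hpow : p < (H+1)^(D+1) := by
    have h1 : (p:ℝ) ≤ y ^ (D+1) := by
      rw [hy, ← Real.exp_nat_mul]
      calc (p:ℝ) = Real.exp x := (Real.exp_log hppos).symm
        _ ≤ _ := by
          apply Real.exp_le_exp.2
          push_cast
          nlinarith
    have h2 : y ^ (D+1) < ((H:ℝ)+1)^(D+1) := pow_lt_pow_left₀ hHy' (by linarith) (by omega)
    exact_mod_cast lt_of_le_of_lt h1 h2
  set L := (D+1) * H with hL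
  set N := 1 + Nat.log 2 p * 5 ^ D with hN
  set R := 8 * N * L ^ 2 with hR
  have hLpos : 0 < L := by rw [hL]; positivity
  have hNpos : 0 < N := by rw [hN]; positivity
  have hlog1 : 1 ≤ Nat.log 2 p := Nat.log_pos (by norm_num) (by omega)
  have hNR : N ≤ R := by
    have hL2 : 1 ≤ L ^ 2 := Nat.pow_pos hLpos
    have := Nat.mul_le_mul_left (8 * N) hL2
    rw [hR]; omega
  have h5N : 5 ^ D ≤ N := by
    have := Nat.mul_le_mul_right (5 ^ D) hlog1
    rw [hN]; omega
  have hLR : L ≤ R := by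
    rw [hR]
    calc L ≤ L ^ 2 := Nat.le_self_pow (by norm_num) L
      _ ≤ 8 * N * L ^ 2 := Nat.le_mul_of_pos_left _ (by omega)
  have bL : (L:ℝ) ≤ y ^ 4 := by
    rw [hL]; push_cast
    calc ((D:ℝ)+1) * H ≤ (3 * y) * y := by gcongr; linarith
      _ ≤ y ^ 4 := by
          have h3 : (3:ℝ) ≤ y ^ 2 := by
            calc (3:ℝ) ≤ 2.7 ^ 2 := by norm_num
              _ ≤ y ^ 2 := by gcongr
          calc 3 * y * y = 3 * y ^ 2 := by ring
            _ ≤ y ^ 2 * y ^ 2 := by gcongr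
            _ = y ^ 4 := by ring
  have b5 : (5:ℝ) ^ D ≤ 8 * y ^ 2 := by
    have e1 : (5:ℝ) ≤ Real.exp 1 ^ 2 := by nlinarith [Real.exp_one_gt_d9]
    calc (5:ℝ) ^ D ≤ (Real.exp 1 ^ 2) ^ D := by gcongr
      _ = Real.exp D ^ 2 := by
          rw [← pow_mul, mul_comm 2 D, pow_mul, ← Real.exp_nat_mul]; simp
      _ ≤ Real.exp (t + 1) ^ 2 := by gcongr
      _ = x ^ 2 * Real.exp 1 ^ 2 := by rw [Real.exp_add, hxt]; ring
      _ ≤ y ^ 2 * 8 := by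
          gcongr
          nlinarith [Real.exp_one_lt_d9, Real.exp_pos 1]
      _ = 8 * y ^ 2 := by ring
  have blog : (Nat.log 2 p : ℝ) ≤ 2 * y := by
    have h1 : 2 ^ Nat.log 2 p ≤ p := Nat.pow_log_le_self 2 (by omega)
    have h2 : (2:ℝ) ^ Nat.log 2 p ≤ p := by exact_mod_cast h1
    have h3 := Real.log_le_log (by positivity) h2
    rw [Real.log_pow] at h3
    have := Real.log_two_gt_d9
    have h4 : (0:ℝ) ≤ Nat.log 2 p := by positivity
    nlinarith
  have bN : (N:ℝ) ≤ y ^ 7 := by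
    rw [hN]; push_cast
    calc 1 + (Nat.log 2 p : ℝ) * 5 ^ D ≤ 1 + (2 * y) * (8 * y ^ 2) := by gcongr
      _ = 1 + 16 * y ^ 3 := by ring
      _ ≤ 17 * y ^ 3 := by
          have h3 : (1:ℝ) ≤ y ^ 3 := one_le_pow₀ hy1
          linarith
      _ ≤ y ^ 4 * y ^ 3 := by
          gcongr
          calc (17:ℝ) ≤ 2.7 ^ 4 := by norm_num
            _ ≤ y ^ 4 := by gcongr
      _ = y ^ 7 := by ring
  have b8 : (8:ℝ) ≤ y ^ 3 := by
    calc (8:ℝ) ≤ 2.7 ^ 3 := by norm_num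
      _ ≤ y ^ 3 := by gcongr
  have bR : (R:ℝ) ≤ y ^ 18 := by
    rw [hR]; push_cast
    calc (8:ℝ) * N * L ^ 2 ≤ y ^ 3 * y ^ 7 * (y ^ 4) ^ 2 := by gcongr
      _ = y ^ 18 := by ring
  have hexp : ∀ k : ℕ, Real.exp (k * x / t) = y ^ k := by
    intro k
    rw [hy, ← Real.exp_nat_mul]; congr 1; rw [hY]; ring
  refine ⟨D, H, N, L, R, hpow, hHpos, rfl, rfl, rfl, by omega, hLR, ?_, ?_⟩
  · have := hexp 21
    push_cast at this
    rw [this]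
    have h4 : (4:ℝ) < y ^ 3 := by linarith
    calc (4 * R : ℝ) ≤ 4 * y ^ 18 := by gcongr
      _ < y ^ 3 * y ^ 18 := by gcongr
      _ = y ^ 21 := by ring
  · have := hexp 115
    push_cast at this
    rw [this]
    have hlog : Real.log (4 * p ^ 2) ≤ y ^ 3 := by
      rw [Real.log_mul (by norm_num) (by positivity), Real.log_pow]
      have : Real.log 4 ≤ 2 := by
        have e : Real.log 4 = 2 * Real.log 2 := by
          rw [show (4:ℝ) = 2 ^ 2 by norm_num, Real.log_pow]; norm_num
        have := Real.log_two_lt_d9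
        linarith
      push_cast
      have : y ^ 3 = y ^ 2 * y := by ring
      nlinarith [mul_self_nonneg y]
    have h160 : (160:ℝ) ≤ y ^ 8 := by
      calc (160:ℝ) ≤ 2.7 ^ 8 := by norm_num
        _ ≤ y ^ 8 := by gcongr
    have hlog0 : 0 ≤ Real.log (4 * p ^ 2) := Real.log_nonneg (by nlinarith)
    calc (160 * L ^ 2 * N ^ 3 * R ^ 4 : ℝ) * (8 * Real.log (4 * p ^ 2))
        ≤ (y ^ 8 * (y ^ 4) ^ 2 * (y ^ 7) ^ 3 * (y ^ 18) ^ 4) * (y ^ 3 * y ^ 3) := by gcongr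
      _ = y ^ 115 := by ring

lemma sum_real_pmf {p : ℕ} [Fact p.Prime] (μ : PMF (ZMod p)) : ∑ x, (μ x).toReal = 1 := by
  rw [← ENNReal.toReal_sum (fun x _ => PMF.apply_ne_top _ _), ← tsum_fintype (L := .unconditional _),
    PMF.tsum_coe]
  simp

lemma walk_rec {p : ℕ} [Fact p.Prime] {g : ZMod p} {ind : ZMod p → ℕ}
    (hind : ∀ x : ZMod p, x ≠ 0 → 1 ≤ ind x ∧ ind x ≤ p - 1 ∧ g ^ ind x = x)
    (c : ZMod p) (hc : c ≠ 0) (X0 : ZMod p) (step : ZMod p → PMF (ZMod p))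
    (hstep : step = (fun x => PMF.map
                    (fun b : Bool × Bool =>
                      if b.1 then x
                      else if b.2 then ((ind x : ZMod p)) * c
                      else ((ind x : ZMod p)) * c⁻¹)
                    (PMF.uniformOfFintype (Bool × Bool)))) (n : ℕ)
    (h0 : (walkDist step X0 n 0).toReal = 0) (y : ZMod p) :
    (walkDist step X0 (n+1) y).toReal = 1/2 * (walkDist step X0 n y).toReal
      + 1/4 * (walkDist step X0 n (phi g (c⁻¹ * y))).toReal
      + 1/4 * (walkDist step X0 n (phi g (c * y))).toReal := by
  have e : walkDist step X0 (n+1) = (walkDist step X0 n).bind step := by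
    unfold walkDist
    rw [Function.iterate_succ_apply']
  rw [e, bind_toReal]
  have h1 := sum_pre hind (fun x => (walkDist step X0 n x).toReal) h0 c hc y
  have h2 := sum_pre hind (fun x => (walkDist step X0 n x).toReal) h0 c⁻¹ (inv_ne_zero hc) y
  rw [inv_inv] at h2
  rw [← h1, ← h2]
  have h3 : (walkDist step X0 n y).toReal = ∑ x, (walkDist step X0 n x).toReal * (if y = x then 1 else 0) := by
    simp
  rw [h3, Finset.mul_sum, Finset.mul_sum, Finset.mul_sum, ← Finset.sum_add_distrib, ← Finset.sum_add_distrib]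
  refine Finset.sum_congr rfl fun x _ => ?_
  have h4 : step x = PMF.map (fun t : Bool × Bool => if t.1 then x else if t.2 then (ind x : ZMod p) * c else (ind x : ZMod p) * c⁻¹)
      (PMF.uniformOfFintype (Bool × Bool)) := by rw [hstep]
  rw [h4, step_toReal]
  ring

lemma walk_zero {p : ℕ} [Fact p.Prime] {g : ZMod p} {ind : ZMod p → ℕ}
    (hind : ∀ x : ZMod p, x ≠ 0 → 1 ≤ ind x ∧ ind x ≤ p - 1 ∧ g ^ ind x = x)
    (c : ZMod p) (hc : c ≠ 0) (X0 : ZMod p) (hX : X0 ≠ 0) (step : ZMod p → PMF (ZMod p))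
    (hstep : step = (fun x => PMF.map
                    (fun b : Bool × Bool =>
                      if b.1 then x
                      else if b.2 then ((ind x : ZMod p)) * c
                      else ((ind x : ZMod p)) * c⁻¹)
                    (PMF.uniformOfFintype (Bool × Bool)))) (n : ℕ) :
    (walkDist step X0 n 0).toReal = 0 := by
  induction n with
  | zero => simp [walkDist, hX.symm]
  | succ n ih =>
    rw [walk_rec hind c hc X0 step hstep n ih]
    simp [phi, ih]

lemma phi_mul_eq_zero {p : ℕ} [Fact p.Prime] {g : ZMod p} {ind : ZMod p → ℕ}
    (hind : ∀ x : ZMod p, x ≠ 0 → 1 ≤ ind x ∧ ind x ≤ p - 1 ∧ g ^ ind x = x)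
    (c : ZMod p) (hc : c ≠ 0) (y : ZMod p) : phi g (c * y) = 0 ↔ y = 0 := by
  constructor
  · intro h
    have h1 : phi g (c * y) = phi g 0 := by rw [h]; simp [phi]
    have := (phi_bijective hind).1 h1
    simpa [hc] using this
  · rintro rfl; simp [phi]

/-- Uniform distribution on the nonzero residues. -/
noncomputable def unif (p : ℕ) (y : ZMod p) : ℝ := if y = 0 then 0 else 1 / ((p:ℝ) - 1)

lemma sum_unif {p : ℕ} [Fact p.Prime] : ∑ y, unif p y = 1 := by
  have hp : (2:ℝ) ≤ p := by exact_mod_cast (Fact.out : p.Prime).two_le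
  have : ∀ y : ZMod p, unif p y = 1 / ((p:ℝ) - 1) - (if y = 0 then 1 / ((p:ℝ) - 1) else 0) := by
    intro y; unfold unif; split_ifs <;> simp
  simp only [this, Finset.sum_sub_distrib, Finset.sum_ite_eq', Finset.mem_univ, if_true,
    Finset.sum_const, Finset.card_univ, ZMod.card, nsmul_eq_mul]
  have : (p:ℝ) - 1 ≠ 0 := by linarith
  field_simp

theorem stmt2 :
    ∃ C1 C2 : ℝ, 0 < C1 ∧ 0 < C2 ∧
      ∀ (p : ℕ) [Fact p.Prime], 16 ≤ p →
        ∀ g : ZMod p, IsPrimitiveRoot g (p - 1) →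
          ∀ ind : ZMod p → ℕ,
            (∀ x : ZMod p, x ≠ 0 → 1 ≤ ind x ∧ ind x ≤ p - 1 ∧ g ^ ind x = x) →
            ∀ γ : ZMod p, γ ≠ 0 →
              Real.exp (C1 * Real.log p / Real.log (Real.log p)) ≤ orderOf γ →
              ∀ X0 : ZMod p, X0 ≠ 0 →
                ∀ step : ZMod p → PMF (ZMod p),
                  step = (fun x => PMF.map
                    (fun b : Bool × Bool =>
                      if b.1 then x
                      else if b.2 then ((ind x : ZMod p)) * γ
                      else ((ind x : ZMod p)) * γ⁻¹)
                    (PMF.uniformOfFintype (Bool × Bool))) →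
                  ∀ n : ℕ, Real.exp (C2 * Real.log p / Real.log (Real.log p)) ≤ n →
                    ∀ A : Finset (ZMod p), (∀ x ∈ A, x ≠ 0) →
                      (1/2) * |(∑ x ∈ A, (walkDist step X0 n x).toReal)
                          - (A.card : ℝ) / ((p : ℝ) - 1)| ≤ 1/4 := by
  refine ⟨21, 115, by norm_num, by norm_num, ?_⟩
  intro p _ hp16 g hg ind hind γ hγ hord X0 hX step hstep n hn A hA
  obtain ⟨D, H, N, L, R, hH, hHpos, hL, hN, hR, h5, hLR, hR4, hfin⟩ := numerics p hp16
  have hpR : (16:ℝ) ≤ p := by exact_mod_cast hp16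
  have hLpos : 0 < L := by rw [hL]; positivity
  have hNpos : 0 < N := by rw [hN]; positivity
  have hRpos : 0 < R := by rw [hR]; positivity
  have hRo : 4 * R < orderOf γ := by exact_mod_cast lt_of_lt_of_le hR4 hord
  have hop : orderOf γ ≤ p - 1 :=
    orderOf_le_of_pow_eq_one (by omega) (ZMod.pow_card_sub_one_eq_one hγ)
  have hord' : ∀ k, 0 < k → k ≤ 2 * R → (γ ^ 2) ^ k ≠ 1 := by
    intro k hk hkR h
    rw [← pow_mul] at h
    have := orderOf_le_of_pow_eq_one (by omega) h
    omega
  obtain ⟨K, hK⟩ : ∃ K : ℝ, K = 160 * L ^ 2 * N ^ 3 * R ^ 4 := ⟨_, rfl⟩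
  have hKpos : 0 < K := by rw [hK]; positivity
  have hK1 : 1 ≤ K := by
    have : 1 ≤ 160 * L ^ 2 * N ^ 3 * R ^ 4 := Nat.succ_le_of_lt (by positivity)
    rw [hK]; exact_mod_cast this
  rw [← hK] at hfin
  obtain ⟨w, hw⟩ : ∃ w : ℕ → ZMod p → ℝ, w = fun m y => (walkDist step X0 m y).toReal := ⟨_, rfl⟩
  obtain ⟨u, hu⟩ : ∃ u : ℕ → ZMod p → ℝ, u = fun m y => w m y - unif p y := ⟨_, rfl⟩
  have hw0 : ∀ m, w m 0 = 0 := by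
    intro m; rw [hw]; exact walk_zero hind γ hγ X0 hX step hstep m
  have hwrec : ∀ m y, w (m+1) y = 1/2 * w m y + 1/4 * w m (phi g (γ⁻¹ * y)) + 1/4 * w m (phi g (γ * y)) := by
    intro m y
    have h0 := hw0 m
    rw [hw] at h0 ⊢
    exact walk_rec hind γ hγ X0 step hstep m h0 y
  have ht : ∀ c : ZMod p, c ≠ 0 → ∀ y, unif p (phi g (c * y)) = unif p y := by
    intro c hc y
    unfold unif
    simp only [phi_mul_eq_zero hind c hc y]
  have hurec : ∀ m y, u (m+1) y = 1/2 * u m y + 1/4 * u m (phi g (γ⁻¹ * y)) + 1/4 * u m (phi g (γ * y)) := by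
    intro m y
    simp only [hu, hwrec, ht γ hγ, ht γ⁻¹ (inv_ne_zero hγ)]
    ring
  have hu0 : ∀ m, u m 0 = 0 := by
    intro m; simp [hu, hw0, unif]
  have husum : ∀ m, ∑ y, u m y = 0 := by
    intro m
    have h1 : ∑ y, w m y = 1 := by rw [hw]; exact sum_real_pmf _
    simp only [hu, Finset.sum_sub_distrib, h1, sum_unif, sub_self]
  have hstepE : ∀ m, ∑ y, u (m+1) y ^ 2 ≤ (1 - 1 / (8 * K)) * ∑ y, u m y ^ 2 := by
    intro m
    have h1 := energy_step (u m)
      ((Equiv.mulLeft₀ γ⁻¹ (inv_ne_zero hγ)).trans (Equiv.ofBijective _ (phi_bijective hind)))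
      ((Equiv.mulLeft₀ γ hγ).trans (Equiv.ofBijective _ (phi_bijective hind)))
    simp only [Equiv.trans_apply, Equiv.ofBijective_apply, Equiv.mulLeft₀_apply, ← hurec] at h1
    have h2 := poincare hg hind γ hγ (u m) (hu0 m) (husum m)
      (∑ y, (u m (phi g (γ⁻¹ * y)) - u m y) ^ 2 + ∑ y, (u m (phi g (γ * y)) - u m y) ^ 2)
      (le_add_of_nonneg_right (Finset.sum_nonneg fun _ _ => sq_nonneg _))
      (le_add_of_nonneg_left (Finset.sum_nonneg fun _ _ => sq_nonneg _))
      D H N L R hH hHpos hL hN hR hord' h5 (by omega)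
    rw [← hK] at h2
    set E := ∑ y, (u m (phi g (γ⁻¹ * y)) - u m y) ^ 2 + ∑ y, (u m (phi g (γ * y)) - u m y) ^ 2
    have h3 : (∑ y, u m y ^ 2) / K ≤ E := by
      rw [div_le_iff₀ hKpos]; linarith
    have h4 : (1 - 1 / (8 * K)) * ∑ y, u m y ^ 2 = ∑ y, u m y ^ 2 - 1/8 * ((∑ y, u m y ^ 2) / K) := by
      field_simp
    rw [h4]
    linarith
  have hdecay : ∀ m : ℕ, ∑ y, u m y ^ 2 ≤ (1 - 1 / (8 * K)) ^ m * ∑ y, u 0 y ^ 2 := by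
    intro m
    have hq : 0 ≤ 1 - 1 / (8 * K) := by
      rw [sub_nonneg, div_le_one (by positivity)]; linarith
    induction m with
    | zero => simp
    | succ m ih =>
      calc _ ≤ (1 - 1 / (8 * K)) * ∑ y, u m y ^ 2 := hstepE m
        _ ≤ (1 - 1 / (8 * K)) * ((1 - 1 / (8 * K)) ^ m * ∑ y, u 0 y ^ 2) := by gcongr
        _ = _ := by ring
  have hU0 : ∑ y, u 0 y ^ 2 ≤ p := by
    have h1 : ∀ y ∈ (Finset.univ : Finset (ZMod p)), u 0 y ^ 2 ≤ 1 := by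
      intro y _
      have a1 : 0 ≤ w 0 y := by rw [hw]; exact ENNReal.toReal_nonneg
      have a2 : w 0 y ≤ 1 := by
        rw [hw]
        exact ENNReal.toReal_le_of_le_ofReal zero_le_one (by simpa using PMF.coe_le_one _ _)
      have a3 : 0 ≤ unif p y := by
        unfold unif; split_ifs
        · exact le_rfl
        · exact div_nonneg zero_le_one (by linarith)
      have a4 : unif p y ≤ 1 := by
        unfold unif; split_ifs
        · exact zero_le_one
        · rw [div_le_one (by linarith)]; linarith
      rw [hu, sq_le_one_iff_abs_le_one, abs_le]
      constructor <;> simp only [] <;> linarith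
    calc _ ≤ ∑ y : ZMod p, (1:ℝ) := Finset.sum_le_sum h1
      _ = p := by simp [ZMod.card]
  have hpow : (1 - 1 / (8 * K)) ^ n ≤ 1 / (4 * (p:ℝ) ^ 2) := by
    have hq : 0 ≤ 1 - 1 / (8 * K) := by
      rw [sub_nonneg, div_le_one (by positivity)]; linarith
    calc (1 - 1 / (8 * K)) ^ n ≤ Real.exp (-(1 / (8 * K))) ^ n :=
          pow_le_pow_left₀ hq (Real.one_sub_le_exp_neg _) n
      _ = Real.exp (-(n / (8 * K))) := by
          rw [← Real.exp_nat_mul]; congr 1; ring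
      _ ≤ Real.exp (-Real.log (4 * (p:ℝ) ^ 2)) := by
          apply Real.exp_le_exp.2
          rw [neg_le_neg_iff, le_div_iff₀ (by positivity)]
          linarith
      _ = 1 / (4 * (p:ℝ) ^ 2) := by
          rw [Real.exp_neg, Real.exp_log (by positivity), one_div]
  have hUn : ∑ y, u n y ^ 2 ≤ 1 / (4 * (p:ℝ)) := by
    calc _ ≤ (1 - 1 / (8 * K)) ^ n * ∑ y, u 0 y ^ 2 := hdecay n
      _ ≤ 1 / (4 * (p:ℝ) ^ 2) * p := by
          apply mul_le_mul hpow hU0 (Finset.sum_nonneg fun _ _ => sq_nonneg _) (by positivity)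
      _ = 1 / (4 * (p:ℝ)) := by field_simp
  have hsA : (∑ x ∈ A, (walkDist step X0 n x).toReal) - (A.card : ℝ) / ((p : ℝ) - 1) = ∑ x ∈ A, u n x := by
    have : ∀ x ∈ A, u n x = (walkDist step X0 n x).toReal - 1 / ((p:ℝ) - 1) := by
      intro x hx
      simp only [hu, hw, unif, if_neg (hA x hx)]
    rw [Finset.sum_congr rfl this, Finset.sum_sub_distrib, Finset.sum_const, nsmul_eq_mul]
    ring
  rw [hsA]
  have hcs : (∑ x ∈ A, u n x) ^ 2 ≤ A.card * ∑ x ∈ A, u n x ^ 2 := sq_sum_le_card_mul_sum_sq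
  have hc : (A.card : ℝ) ≤ p := by
    have := Finset.card_le_univ A
    rw [ZMod.card] at this
    exact_mod_cast this
  have hsub : ∑ x ∈ A, u n x ^ 2 ≤ ∑ x, u n x ^ 2 :=
    Finset.sum_le_univ_sum_of_nonneg fun _ => sq_nonneg _
  have hfinal : (∑ x ∈ A, u n x) ^ 2 ≤ (1/2) ^ 2 := by
    calc _ ≤ (A.card:ℝ) * ∑ x ∈ A, u n x ^ 2 := hcs
      _ ≤ p * (1 / (4 * (p:ℝ))) := by
          apply mul_le_mul hc (hsub.trans hUn) (Finset.sum_nonneg fun _ _ => sq_nonneg _) (by positivity)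
      _ = (1/2) ^ 2 := by field_simp; norm_num
  have := abs_le_of_sq_le_sq hfinal (by norm_num)
  linarith
end

section
/- Let p be a prime, let A, B ⊆ F_p^* be finite nonempty sets, and let L = {x ↦ ax + b : a ∈ A, b ∈ B} ⊆ Aff(F_p), so |L| = |A||B|. Then for every even integer k ≥ 2 one has T_k(L) ≤ |A|^{2k−1}·T^+_k(B), where T^+_k(B) is the number of 2k-tuples (b_1, …, b_{2k}) ∈ B^{2k} with b_1 − b_2 + b_3 − ⋯ + b_{k−1} − b_k = b_{k+1} − b_{k+2} + ⋯ + b_{2k−1} − b_{2k}. -/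
open scoped BigOperators

/-- Alternating product `g 0 * (g 1)⁻¹ * g 2 * (g 3)⁻¹ * ⋯` of a tuple in a group. -/
def altp {G : Type*} [Group G] (m : ℕ) (g : Fin m → G) : G :=
  (((List.finRange m).map (fun i : Fin m => if (i : ℕ) % 2 = 0 then g i else (g i)⁻¹)).prod)

/-- `Tmul m L` is the number of `2m`-tuples `(l_1, …, l_{2m}) ∈ L^{2m}` with
`l_1 l_2⁻¹ ⋯ l_{m-1} l_m⁻¹ = l_{m+1} l_{m+2}⁻¹ ⋯ l_{2m-1} l_{2m}⁻¹` (for even `m`). -/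
noncomputable def Tmul {G : Type*} [Group G] (m : ℕ) (L : Finset G) : ℕ :=
  Set.ncard {a : Fin (2 * m) → G |
    (∀ i, a i ∈ L) ∧
    altp m (fun i : Fin m => a ⟨i.val, by have := i.isLt; omega⟩) =
      altp m (fun i : Fin m => a ⟨m + i.val, by have := i.isLt; omega⟩)}

/-- `TplusAlt m B` is the number of `2m`-tuples `(b_1, …, b_{2m}) ∈ B^{2m}` with
`b_1 - b_2 + b_3 - ⋯ + b_{m-1} - b_m = b_{m+1} - b_{m+2} + ⋯ + b_{2m-1} - b_{2m}`
(for even `m`). -/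
noncomputable def TplusAlt {M : Type*} [AddCommGroup M] (m : ℕ) (B : Finset M) : ℕ :=
  Set.ncard {b : Fin (2 * m) → M |
    (∀ i, b i ∈ B) ∧
    (∑ i : Fin m, (if (i : ℕ) % 2 = 0 then b ⟨i.val, by have := i.isLt; omega⟩
        else -b ⟨i.val, by have := i.isLt; omega⟩)) =
      (∑ i : Fin m, (if (i : ℕ) % 2 = 0 then b ⟨m + i.val, by have := i.isLt; omega⟩
        else -b ⟨m + i.val, by have := i.isLt; omega⟩))}

namespace Stmt4Aux

lemma sum_split {M : Type*} [AddCommMonoid M] (m : ℕ) (f : Fin (2 * m) → M) :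
    ∑ i, f i = ∑ i : Fin m, f ⟨i.val, by have := i.isLt; omega⟩ +
      ∑ i : Fin m, f ⟨m + i.val, by have := i.isLt; omega⟩ := by
  have h : m + m = 2 * m := by omega
  rw [← Equiv.sum_comp (finCongr h) f, Fin.sum_univ_add]
  rfl

lemma prod_split {M : Type*} [CommMonoid M] (m : ℕ) (f : Fin (2 * m) → M) :
    ∏ i, f i = (∏ i : Fin m, f ⟨i.val, by have := i.isLt; omega⟩) *
      ∏ i : Fin m, f ⟨m + i.val, by have := i.isLt; omega⟩ := by
  have h : m + m = 2 * m := by omega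
  rw [← Equiv.prod_comp (finCongr h) f, Fin.prod_univ_add]
  rfl

/-- number of solutions of a linear equation -/
noncomputable def Nsol {F : Type*} [Field F] [DecidableEq F] {n : ℕ}
    (B : Finset F) (c : Fin n → F) : ℕ :=
  ((Fintype.piFinset (fun _ : Fin n => B)).filter (fun b => ∑ i, c i * b i = 0)).card

lemma map_sum_eq {R : Type*} [AddCommGroup R] (χ : AddChar R ℂ) {n : ℕ} (f : Fin n → R) :
    χ (∑ i, f i) = ∏ i, χ (f i) := by
  induction n with
  | zero => simp
  | succ n ih => rw [Fin.sum_univ_castSucc, Fin.prod_univ_castSucc, AddChar.map_add_eq_mul, ih]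

/-- exponential sum -/
noncomputable def S {p : ℕ} [NeZero p] (B : Finset (ZMod p)) (t : ZMod p) : ℂ :=
  ∑ b ∈ B, ZMod.stdAddChar (t * b)

lemma fourier {p : ℕ} [Fact p.Prime] {n : ℕ} (B : Finset (ZMod p)) (c : Fin n → ZMod p) :
    (p : ℂ) * Nsol B c = ∑ t : ZMod p, ∏ i, S B (c i * t) := by
  have h1 : ∀ t : ZMod p, ∏ i, S B (c i * t) =
      ∑ b ∈ Fintype.piFinset (fun _ : Fin n => B), ZMod.stdAddChar (t * ∑ i, c i * b i) := by
    intro t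
    unfold S
    rw [Finset.prod_univ_sum]
    refine Finset.sum_congr rfl fun b _ => ?_
    rw [Finset.mul_sum, map_sum_eq]
    refine Finset.prod_congr rfl fun i _ => ?_
    congr 1; ring
  simp_rw [h1]
  rw [Finset.sum_comm]
  have h2 : ∀ b : Fin n → ZMod p, ∑ t : ZMod p, (ZMod.stdAddChar (t * ∑ i, c i * b i) : ℂ) =
      if ∑ i, c i * b i = 0 then (p : ℂ) else 0 := by
    intro b
    have := AddChar.sum_mulShift (∑ i, c i * b i) (ZMod.isPrimitive_stdAddChar p)
    rw [this, ZMod.card]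
    split_ifs <;> simp
  simp_rw [h2]
  rw [← Finset.sum_filter, Finset.sum_const, nsmul_eq_mul, mul_comm]
  rfl

lemma amgm {n : ℕ} (hn : 0 < n) (x : Fin n → ℝ) (hx : ∀ i, 0 ≤ x i) :
    ∏ i, x i ≤ (1 / n : ℝ) * ∑ i, x i ^ n := by
  have hn' : (n : ℝ) ≠ 0 := by positivity
  have := Real.geom_mean_le_arith_mean_weighted Finset.univ (fun _ => (1 / n : ℝ))
    (fun i => x i ^ n) (fun _ _ => by positivity) (by simp [hn'])
    (fun i _ => pow_nonneg (hx i) n)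
  rw [Finset.mul_sum]
  refine le_trans (le_of_eq ?_) this
  refine Finset.prod_congr rfl fun i _ => ?_
  rw [one_div, Real.pow_rpow_inv_natCast (hx i) hn.ne']

lemma upper {p : ℕ} [Fact p.Prime] {n : ℕ} (hn : 0 < n) (B : Finset (ZMod p))
    (c : Fin n → ZMod p) (hc : ∀ i, c i ≠ 0) :
    (p : ℝ) * Nsol B c ≤ ∑ t : ZMod p, ‖S B t‖ ^ n := by
  have hn' : (n : ℝ) ≠ 0 := by positivity
  have h := congrArg norm (fourier B c)
  rw [norm_mul, Complex.norm_natCast, Complex.norm_natCast] at h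
  rw [h]
  calc _ ≤ ∑ t : ZMod p, ‖∏ i, S B (c i * t)‖ := norm_sum_le _ _
    _ = ∑ t : ZMod p, ∏ i, ‖S B (c i * t)‖ := by simp_rw [norm_prod]
    _ ≤ ∑ t : ZMod p, (1 / n : ℝ) * ∑ i, ‖S B (c i * t)‖ ^ n :=
        Finset.sum_le_sum fun t _ => amgm hn _ fun i => norm_nonneg _
    _ = (1 / n : ℝ) * ∑ i, ∑ t : ZMod p, ‖S B (c i * t)‖ ^ n := by
        rw [← Finset.mul_sum, Finset.sum_comm]
    _ = (1 / n : ℝ) * ∑ i : Fin n, ∑ t : ZMod p, ‖S B t‖ ^ n := by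
        congr 1
        refine Finset.sum_congr rfl fun i _ => ?_
        exact Equiv.sum_comp (Equiv.mulLeft₀ (c i) (hc i)) (fun t => ‖S B t‖ ^ n)
    _ = _ := by
        simp only [Finset.sum_const, Finset.card_univ, Fintype.card_fin, nsmul_eq_mul]
        field_simp

lemma S_neg {p : ℕ} [Fact p.Prime] (B : Finset (ZMod p)) (t : ZMod p) :
    S B (-t) = starRingEnd ℂ (S B t) := by
  unfold S
  rw [map_sum]
  refine Finset.sum_congr rfl fun b _ => ?_
  rw [neg_mul, AddChar.map_neg_eq_conj]

/-- signs -/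
def sg (F : Type*) [Field F] (n : ℕ) : F := if n % 2 = 0 then 1 else -1

/-- combined signs -/
def sgn2 (F : Type*) [Field F] (m : ℕ) (i : Fin (2 * m)) : F :=
  if i.val < m then sg F i.val else - sg F (i.val - m)

lemma S_pair {p : ℕ} [Fact p.Prime] (B : Finset (ZMod p)) (t : ZMod p) :
    S B t * S B (-t) = ((‖S B t‖ ^ 2 : ℝ) : ℂ) := by
  rw [S_neg, Complex.mul_conj, Complex.normSq_eq_norm_sq]

lemma exact_sgn {p : ℕ} [Fact p.Prime] (m : ℕ) (B : Finset (ZMod p)) :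
    (p : ℝ) * Nsol B (sgn2 (ZMod p) m) = ∑ t : ZMod p, ‖S B t‖ ^ (2 * m) := by
  have h := fourier B (sgn2 (ZMod p) m)
  have h2 : ∀ t : ZMod p, ∏ i, S B (sgn2 (ZMod p) m i * t) = ((‖S B t‖ ^ (2 * m) : ℝ) : ℂ) := by
    intro t
    rw [prod_split, ← Finset.prod_mul_distrib]
    have : ∀ i : Fin m, S B (sgn2 (ZMod p) m ⟨i.val, by have := i.isLt; omega⟩ * t) *
        S B (sgn2 (ZMod p) m ⟨m + i.val, by have := i.isLt; omega⟩ * t) =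
        ((‖S B t‖ ^ 2 : ℝ) : ℂ) := by
      intro i
      have hi := i.isLt
      simp only [sgn2, hi, if_true, sg]
      rw [if_neg (show ¬ m + i.val < m by omega)]
      simp only [Nat.add_sub_cancel_left]
      split_ifs
      · simpa using S_pair B t
      · rw [mul_comm]; simpa using S_pair B t
    simp_rw [this]
    rw [Finset.prod_const, pow_mul]
    simp
  simp_rw [h2] at h
  exact_mod_cast h

lemma Nsol_le {p : ℕ} [Fact p.Prime] (m : ℕ) (hm : 0 < m) (B : Finset (ZMod p))
    (c : Fin (2 * m) → ZMod p) (hc : ∀ i, c i ≠ 0) :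
    Nsol B c ≤ Nsol B (sgn2 (ZMod p) m) := by
  have h := upper (by omega) B c hc
  rw [← exact_sgn] at h
  have hp : (0 : ℝ) < p := by exact_mod_cast (Fact.out : p.Prime).pos
  exact_mod_cast le_of_mul_le_mul_left h hp

lemma Tplus_eq {p : ℕ} [Fact p.Prime] (m : ℕ) (B : Finset (ZMod p)) :
    TplusAlt m B = Nsol B (sgn2 (ZMod p) m) := by
  unfold TplusAlt Nsol
  rw [← Set.ncard_coe_finset]
  congr 1
  ext b
  simp only [Set.mem_ofPred_eq, Finset.coe_filter, Fintype.mem_piFinset]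
  refine and_congr_right fun _ => ?_
  rw [sum_split]
  have h1 : ∀ i : Fin m, sgn2 (ZMod p) m ⟨i.val, by have := i.isLt; omega⟩ *
      b ⟨i.val, by have := i.isLt; omega⟩ =
      (if (i : ℕ) % 2 = 0 then b ⟨i.val, by have := i.isLt; omega⟩
        else -b ⟨i.val, by have := i.isLt; omega⟩) := by
    intro i
    have hi := i.isLt
    simp only [sgn2, hi, if_true, sg]
    split_ifs <;> simp
  have h2 : ∀ i : Fin m, sgn2 (ZMod p) m ⟨m + i.val, by have := i.isLt; omega⟩ *
      b ⟨m + i.val, by have := i.isLt; omega⟩ =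
      -(if (i : ℕ) % 2 = 0 then b ⟨m + i.val, by have := i.isLt; omega⟩
        else -b ⟨m + i.val, by have := i.isLt; omega⟩) := by
    intro i
    have hi := i.isLt
    simp only [sgn2, sg]
    rw [if_neg (show ¬ m + i.val < m by omega)]
    simp only [Nat.add_sub_cancel_left]
    split_ifs <;> simp
  simp_rw [h1, h2]
  rw [Finset.sum_neg_distrib, ← sub_eq_add_neg, sub_eq_zero]

/-- alternating inverse -/
def sl {F : Type*} [Field F] (n : ℕ) (x : F) : F := if n % 2 = 0 then x else x⁻¹

lemma sl_inj {F : Type*} [Field F] (n : ℕ) : Function.Injective (sl (F := F) n) := by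
  intro x y h
  unfold sl at h
  split_ifs at h
  · exact h
  · exact inv_injective h

lemma sl_ne {F : Type*} [Field F] (n : ℕ) {x : F} (hx : x ≠ 0) : sl n x ≠ 0 := by
  unfold sl
  split_ifs
  · exact hx
  · exact inv_ne_zero hx

lemma altp_succ {G : Type*} [Group G] (m : ℕ) (g : Fin (m + 1) → G) :
    altp (m + 1) g = altp m (fun i => g i.castSucc) *
      (if m % 2 = 0 then g (Fin.last m) else (g (Fin.last m))⁻¹) := by
  unfold altp
  rw [List.finRange_succ_last]
  simp [List.map_append, Function.comp_def]

lemma altp_formula {F : Type*} [Field F] (m : ℕ) : ∀ a : Fin m → F, (∀ i, a i ≠ 0) →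
    ∃ c : Fin m → F, (∀ i, c i ≠ 0) ∧ ∀ (b : Fin m → F) (g : Fin m → Equiv.Perm F),
      (∀ i x, g i x = a i * x + b i) →
      ∀ x, altp m g x = (∏ i, sl i.val (a i)) * x + ∑ i, c i * b i := by
  induction m with
  | zero =>
    intro a _
    refine ⟨fun _ => 1, fun _ => one_ne_zero, fun b g _ x => ?_⟩
    simp [altp]
  | succ m ih =>
    intro a ha
    obtain ⟨c, hc, h⟩ := ih (fun i => a i.castSucc) (fun i => ha _)
    have hP : (∏ i : Fin m, sl i.val (a i.castSucc)) ≠ 0 :=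
      Finset.prod_ne_zero_iff.2 fun i _ => sl_ne _ (ha _)
    set P := ∏ i : Fin m, sl i.val (a i.castSucc) with hPdef
    have hl := ha (Fin.last m)
    refine ⟨Fin.snoc (α := fun _ => F) c
      (if m % 2 = 0 then P else -(P * (a (Fin.last m))⁻¹)), ?_, ?_⟩
    · intro i
      refine Fin.lastCases ?_ (fun i => ?_) i
      · rw [Fin.snoc_last]
        split_ifs
        · exact hP
        · exact neg_ne_zero.2 (mul_ne_zero hP (inv_ne_zero hl))
      · rw [Fin.snoc_castSucc]; exact hc i
    · intro b g hg x
      rw [altp_succ, Equiv.Perm.mul_apply,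
        h (fun i => b i.castSucc) (fun i => g i.castSucc) (fun i x => hg _ x),
        Fin.prod_univ_castSucc, Fin.sum_univ_castSucc]
      simp only [Fin.snoc_last, Fin.snoc_castSucc, Fin.val_castSucc, Fin.val_last]
      rw [← hPdef]
      by_cases hm : m % 2 = 0
      · simp only [hm, if_true, sl, hg]
        ring
      · have : (g (Fin.last m))⁻¹ x = (a (Fin.last m))⁻¹ * (x - b (Fin.last m)) := by
          rw [Equiv.Perm.inv_eq_iff_eq, hg]
          field_simp
          ring
        simp only [hm, if_false, sl, this]
        ring

lemma slope_count {F : Type*} [Field F] [DecidableEq F] (n : ℕ) (A : Finset F)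
    (hA : ∀ a ∈ A, a ≠ 0) (e : Fin (n + 1) → F → F) (he : ∀ i, Function.Injective (e i))
    (he0 : ∀ i x, x ≠ 0 → e i x ≠ 0) :
    ((Fintype.piFinset (fun _ : Fin (n + 1) => A)).filter
      (fun a => ∏ i, e i (a i) = 1)).card ≤ A.card ^ n := by
  have hcard : (Fintype.piFinset (fun _ : Fin n => A)).card = A.card ^ n := by simp
  rw [← hcard]
  refine Finset.card_le_card_of_injOn (fun a i => a i.castSucc) ?_ ?_
  · intro a ha
    simp only [Finset.coe_filter, Fintype.mem_piFinset, Set.mem_ofPred_eq] at ha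
    simp only [Finset.mem_coe, Fintype.mem_piFinset]
    exact fun i => ha.1 _
  · intro a ha a' ha' h
    simp only [Finset.coe_filter, Fintype.mem_piFinset, Set.mem_ofPred_eq] at ha ha'
    have hc : ∀ i : Fin n, a i.castSucc = a' i.castSucc := fun i => congrFun h i
    have h1 := ha.2.trans ha'.2.symm
    rw [Fin.prod_univ_castSucc, Fin.prod_univ_castSucc] at h1
    simp_rw [hc] at h1
    have hne : (∏ i : Fin n, e i.castSucc (a' i.castSucc)) ≠ 0 :=
      Finset.prod_ne_zero_iff.2 fun i _ => he0 _ _ (hA _ (ha'.1 _))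
    have h2 := he _ (mul_left_cancel₀ hne h1)
    funext i
    exact Fin.lastCases h2 hc i

/-- combined slope function -/
def sl2 {F : Type*} [Field F] (m : ℕ) (i : ℕ) (x : F) : F :=
  if i < m then sl i x else (sl (i - m) x)⁻¹

lemma sl2_prod {F : Type*} [Field F] (m : ℕ) (a : Fin (2 * m) → F) (ha : ∀ i, a i ≠ 0) 
    (h : ∏ i : Fin m, sl i.val (a ⟨i.val, by have := i.isLt; omega⟩) =
      ∏ i : Fin m, sl i.val (a ⟨m + i.val, by have := i.isLt; omega⟩)) :
    ∏ i, sl2 m i.val (a i) = 1 := by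
  rw [prod_split]
  simp only [sl2, Fin.is_lt, if_true, Nat.add_sub_cancel_left, Nat.not_lt.2 (Nat.le_add_right _ _),
    if_false]
  rw [h, Finset.prod_inv_distrib, mul_inv_cancel₀]
  exact Finset.prod_ne_zero_iff.2 fun i _ => sl_ne _ (ha _)

end Stmt4Aux

open Stmt4Aux

theorem stmt4 :
    ∀ (p : ℕ) [Fact p.Prime],
      ∀ A B : Finset (ZMod p), A.Nonempty → B.Nonempty →
        (∀ a ∈ A, a ≠ 0) → (∀ b ∈ B, b ≠ 0) →
        ∀ L : Finset (Equiv.Perm (ZMod p)),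
          (∀ l : Equiv.Perm (ZMod p), l ∈ L ↔ ∃ a ∈ A, ∃ b ∈ B, ∀ x, l x = a * x + b) →
          L.card = A.card * B.card →
          ∀ k : ℕ, 2 ≤ k → Even k →
            Tmul k L ≤ A.card ^ (2 * k - 1) * TplusAlt k B := by
  intro p _ A B _ _ hA _ L hL _ k hk _
  have hform : ∀ l ∈ L, l 1 - l 0 ∈ A ∧ l 0 ∈ B ∧ ∀ x, l x = (l 1 - l 0) * x + l 0 := by
    intro l hl
    obtain ⟨a, ha, b, hb, h⟩ := (hL l).1 hl
    have h0 : l 0 = b := by rw [h]; ring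
    have h1 : l 1 - l 0 = a := by rw [h, h]; ring
    rw [h1, h0]
    exact ⟨ha, hb, h⟩
  classical
  rw [Tplus_eq]
  set D : Finset (Fin (2 * k) → Equiv.Perm (ZMod p)) :=
    (Fintype.piFinset (fun _ : Fin (2 * k) => L)).filter (fun a =>
      altp k (fun i : Fin k => a ⟨i.val, by have := i.isLt; omega⟩) =
      altp k (fun i : Fin k => a ⟨k + i.val, by have := i.isLt; omega⟩)) with hD
  have hT : Tmul k L = D.card := by
    unfold Tmul
    rw [← Set.ncard_coe_finset]
    congr 1
    ext a
    simp [hD, Fintype.mem_piFinset]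
  rw [hT]
  set t := (Fintype.piFinset (fun _ : Fin (2 * k) => A)).filter
      (fun a => ∏ i : Fin (2 * k), sl2 k i.val (a i) = 1) with ht
  have htc : t.card ≤ A.card ^ (2 * k - 1) := by
    obtain ⟨n, hn⟩ : ∃ n, 2 * k = n + 1 := ⟨2 * k - 1, by omega⟩
    rw [ht]
    have hn' : 2 * k - 1 = n := by omega
    rw [hn']
    clear_value D
    clear hT ht t hD D
    rw [hn]
    refine slope_count n A hA (fun i => sl2 k i.val) ?_ ?_
    · intro i x y h
      simp only [sl2] at h
      split_ifs at h
      · exact sl_inj _ h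
      · exact sl_inj _ (inv_injective h)
    · intro i x hx
      simp only [sl2]
      split_ifs
      · exact sl_ne _ hx
      · exact inv_ne_zero (sl_ne _ hx)
  have key : ∀ l ∈ D, ∀ a : Fin (2 * k) → ZMod p, (fun i => l i 1 - l i 0) = a →
      (∀ i, a i ∈ A) ∧ (∀ i, l i 0 ∈ B) ∧ (∀ i x, l i x = a i * x + l i 0) ∧ 
      altp k (fun i : Fin k => l ⟨i.val, by have := i.isLt; omega⟩) =
      altp k (fun i : Fin k => l ⟨k + i.val, by have := i.isLt; omega⟩) := by
    rintro l hl a rfl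
    simp only [hD, Finset.mem_filter, Fintype.mem_piFinset] at hl
    exact ⟨fun i => (hform _ (hl.1 i)).1, fun i => (hform _ (hl.1 i)).2.1,
      fun i => (hform _ (hl.1 i)).2.2, hl.2⟩
  have main : D.card ≤ Nsol B (sgn2 (ZMod p) k) * t.card := by
    refine Finset.card_le_mul_card_image_of_maps_to
      (f := fun l i => l i 1 - l i 0) ?_ _ ?_
    · intro l hl
      obtain ⟨h1, h2, h3, h4⟩ := key l hl _ rfl
      rw [ht, Finset.mem_filter, Fintype.mem_piFinset]
      refine ⟨h1, sl2_prod k _ (fun i => hA _ (h1 i)) ?_⟩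
      obtain ⟨c, hc, hcf⟩ := altp_formula k
        (fun i => l ⟨i.val, by have := i.isLt; omega⟩ 1 - l ⟨i.val, by have := i.isLt; omega⟩ 0)
        (fun i => hA _ (h1 _))
      obtain ⟨c', hc', hcf'⟩ := altp_formula k
        (fun i => l ⟨k + i.val, by have := i.isLt; omega⟩ 1 -
          l ⟨k + i.val, by have := i.isLt; omega⟩ 0)
        (fun i => hA _ (h1 _))
      have e := hcf _ _ (fun i x => h3 _ x)
      have e' := hcf' _ _ (fun i x => h3 _ x)
      rw [h4] at e
      have q0 := (e 0).symm.trans (e' 0)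
      have q1 := (e 1).symm.trans (e' 1)
      simp only [mul_zero, zero_add] at q0
      rw [q0] at q1
      simpa using q1
    · intro a hat
      rw [ht, Finset.mem_filter, Fintype.mem_piFinset] at hat
      obtain ⟨c, hc, hcf⟩ := altp_formula k
        (fun i => a ⟨i.val, by have := i.isLt; omega⟩) (fun i => hA _ (hat.1 _))
      obtain ⟨c', hc', hcf'⟩ := altp_formula k
        (fun i => a ⟨k + i.val, by have := i.isLt; omega⟩) (fun i => hA _ (hat.1 _))
      let C : Fin (2 * k) → ZMod p := fun i =>
        if h : i.val < k then c ⟨i.val, h⟩ else - c' ⟨i.val - k, by have := i.isLt; omega⟩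
      have hC : ∀ i, C i ≠ 0 := by
        intro i
        simp only [C]
        split_ifs
        · exact hc _
        · exact neg_ne_zero.2 (hc' _)
      refine le_trans ?_ (Nsol_le k (by omega) B C hC)
      unfold Nsol
      refine Finset.card_le_card_of_injOn (fun l i => l i 0) ?_ ?_
      · intro l hl
        rw [Finset.mem_coe, Finset.mem_filter] at hl
        obtain ⟨h1, h2, h3, h4⟩ := key l hl.1 a hl.2
        rw [Finset.mem_coe, Finset.mem_filter, Fintype.mem_piFinset]
        refine ⟨h2, ?_⟩
        have e := hcf _ _ (fun i x => h3 _ x) 0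
        have e' := hcf' _ _ (fun i x => h3 _ x) 0
        rw [h4] at e
        have q0 := e.symm.trans e'
        simp only [mul_zero, zero_add] at q0
        rw [sum_split]
        simp only [C, Fin.is_lt, dif_pos, Nat.add_sub_cancel_left,
          Nat.not_lt.2 (Nat.le_add_right _ _), dif_neg, not_false_eq_true, neg_mul,
          Finset.sum_neg_distrib, Fin.eta]
        rw [q0, add_neg_cancel]
      · intro l hl l' hl' h
        rw [Finset.mem_coe, Finset.mem_filter] at hl hl'
        obtain ⟨_, _, h3, _⟩ := key l hl.1 a hl.2
        obtain ⟨_, _, h3', _⟩ := key l' hl'.1 a hl'.2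
        funext i
        ext1 x
        have := congrFun h i
        simp only at this
        rw [h3, h3', this]
  calc D.card ≤ _ := main
    _ ≤ _ := by rw [mul_comm]; exact Nat.mul_le_mul_right _ htc
end
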